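/- arXiv:2506.01030 — 2 statements merged into one kernel-verified Lean document; each statement's English description precedes it below -/
import Mathlib

section
/- Under Condition (★), for every integer h ≥ 2 there is a constant C (depending only on h and on the data P, N, κ, θ) such that for all sufficiently large real x, | #𝒩_h(x) − κ·γ_h·x^{1/h} | ≤ C·R_{N_h}(x), where R_{N_h}(x) := x^{θ/h} if h/(h+1) < θ; R_{N_h}(x) := x^{1/(h+1)}·log x if θ = h/(h+i) for some i ∈ {1,…,h−1}; and R_{N_h}(x) := x^{1/(h+1)} if h/(h+1) > θ and θ ≠ h/(h+i) for all i ∈ {1,…,h−1}. -/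
open Filter Topology Asymptotics
open scoped Classical

noncomputable section

/-- The norm on the free abelian monoid `P →₀ ℕ`, extended multiplicatively
from the norm `N` on the prime elements. -/
def Nm {P : Type*} (N : P → ℕ) (m : P →₀ ℕ) : ℕ :=
  m.prod fun p k => N p ^ k

/-- The number of distinct prime elements generating `m`. -/
def omegaM {P : Type*} (m : P →₀ ℕ) : ℕ := m.support.card

/-- `m` is `h`-free: every multiplicity is at most `h - 1`. -/
def HFree {P : Type*} (h : ℕ) (m : P →₀ ℕ) : Prop := ∀ p, m p ≤ h - 1

/-- `m` is `h`-full: every nonzero multiplicity is at least `h`. -/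
def HFull {P : Type*} (h : ℕ) (m : P →₀ ℕ) : Prop := ∀ p, m p = 0 ∨ h ≤ m p

/-- Condition (★): `#{m : N(m) ≤ x} = κ·x + O(x^θ)` with `κ > 0`, `0 ≤ θ < 1`. -/
def StarCond {P : Type*} (N : P → ℕ) (κ θ : ℝ) : Prop :=
  0 < κ ∧ 0 ≤ θ ∧ θ < 1 ∧
    (fun x : ℝ => (({m : P →₀ ℕ | (Nm N m : ℝ) ≤ x}.ncard : ℝ) - κ * x))
      =O[atTop] fun x : ℝ => x ^ θ

/-- The generalized zeta function `ζ_M(s) = ∑_m N(m)^{-s}`. -/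
def zetaM {P : Type*} (N : P → ℕ) (s : ℝ) : ℝ :=
  ∑' m : P →₀ ℕ, 1 / (Nm N m : ℝ) ^ s

/-- The constant `γ_h`. -/
def gammah {P : Type*} (N : P → ℕ) (h : ℕ) : ℝ :=
  ∏' p : P, (1 + ((N p : ℝ) - (N p : ℝ) ^ (1 / (h : ℝ))) /
    ((N p : ℝ) ^ 2 * ((N p : ℝ) ^ (1 / (h : ℝ)) - 1)))

/-- `A` is the Mertens constant `𝔄` of the prime system:
`𝔄 = lim (∑_{N(p) ≤ x} 1/N(p) − log log x)`. -/
def IsMertens {P : Type*} (N : P → ℕ) (A : ℝ) : Prop :=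
  Tendsto (fun x : ℝ =>
      (∑ᶠ p ∈ {p : P | (N p : ℝ) ≤ x}, 1 / (N p : ℝ)) - Real.log (Real.log x))
    atTop (𝓝 A)

/-- The constant `𝔅 = -π²/6`. -/
def Bconst : ℝ := -(Real.pi ^ 2) / 6

/-- The constant `ℭ₁`, given the Mertens constant `A`. -/
def C1const {P : Type*} (N : P → ℕ) (h : ℕ) (A : ℝ) : ℝ :=
  A - ∑' p : P, ((N p : ℝ) - 1) / ((N p : ℝ) * ((N p : ℝ) ^ h - 1))

/-- The constant `ℭ₂`, given the Mertens constant `A`. -/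
def C2const {P : Type*} (N : P → ℕ) (h : ℕ) (A : ℝ) : ℝ :=
  C1const N h A ^ 2 + C1const N h A + Bconst -
    ∑' p : P, (((N p : ℝ) ^ (h - 1) - 1) / ((N p : ℝ) ^ h - 1)) ^ 2

/-- The convergent series `𝔏_h(r)`. -/
def LhSum {P : Type*} (N : P → ℕ) (h : ℕ) (r : ℝ) : ℝ :=
  ∑' p : P, 1 / ((N p : ℝ) ^ (r / (h : ℝ) - 1) *
    ((N p : ℝ) - (N p : ℝ) ^ (1 - 1 / (h : ℝ)) + 1))

/-- The constant `𝔇₁`, given the Mertens constant `A`. -/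
def D1const {P : Type*} (N : P → ℕ) (h : ℕ) (A : ℝ) : ℝ :=
  A - Real.log (h : ℝ) + LhSum N h ((h : ℝ) + 1) - LhSum N h (2 * (h : ℝ))

/-- The constant `𝔇₂`, given the Mertens constant `A`. -/
def D2const {P : Type*} (N : P → ℕ) (h : ℕ) (A : ℝ) : ℝ :=
  D1const N h A ^ 2 + D1const N h A + Bconst -
    ∑' p : P, (1 / ((N p : ℝ) - (N p : ℝ) ^ (1 - 1 / (h : ℝ)) + 1)) ^ 2

/-- The error term `R_{S_h}(x)` for `h`-free counts. -/
def RSfree (h : ℕ) (θ : ℝ) (x : ℝ) : ℝ :=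
  if 1 / (h : ℝ) < θ then x ^ θ
  else if 1 / (h : ℝ) = θ then x ^ (1 / (h : ℝ)) * Real.log x
  else x ^ (1 / (h : ℝ))

/-- The error term `R_{N_h}(x)` for `h`-full counts. -/
def RNfull (h : ℕ) (θ : ℝ) (x : ℝ) : ℝ :=
  if (h : ℝ) / ((h : ℝ) + 1) < θ then x ^ (θ / (h : ℝ))
  else if ∃ i : ℕ, 1 ≤ i ∧ i ≤ h - 1 ∧ θ = (h : ℝ) / ((h : ℝ) + (i : ℝ)) then
    x ^ (1 / ((h : ℝ) + 1)) * Real.log x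
  else x ^ (1 / ((h : ℝ) + 1))

namespace HF

lemma log_core {ι : Type*} (g : ι → ℕ) (hg : ∀ i, 1 ≤ g i) (A α β : ℝ) (hβ : 0 ≤ β)
    (hc : ∀ (s : Finset ι) (y : ℝ), 1 ≤ y → (∀ i ∈ s, (g i : ℝ) ≤ y) → (s.card : ℝ) ≤ A * y ^ α)
    (s : Finset ι) (J0 J1 : ℕ) (hs : ∀ i ∈ s, J0 ≤ Nat.log 2 (g i) ∧ Nat.log 2 (g i) < J1) :
    ∑ i ∈ s, (g i : ℝ) ^ (-β) ≤ ∑ j ∈ Finset.Ico J0 J1, A * 2 ^ α * ((2 : ℝ) ^ (α - β)) ^ j := by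
  rw [← Finset.sum_fiberwise_of_maps_to (s := s) (t := Finset.Ico J0 J1)
    (g := fun i => Nat.log 2 (g i)) (fun i hi => Finset.mem_Ico.2 (hs i hi))]
  refine Finset.sum_le_sum fun j _ => ?_
  have h1 : ∀ i ∈ s.filter (fun i => Nat.log 2 (g i) = j), (g i : ℝ) ^ (-β) ≤ ((2 : ℝ) ^ (-β)) ^ j := by
    intro i hi
    have hj := (Finset.mem_filter.1 hi).2
    have h2 : 2 ^ j ≤ g i := by
      rw [← hj]; exact Nat.pow_log_le_self 2 (by have := hg i; omega)
    have h3 : (2 : ℝ) ^ j ≤ g i := by exact_mod_cast h2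
    rw [← Real.rpow_natCast, ← Real.rpow_mul (by norm_num), mul_comm, Real.rpow_mul (by norm_num),
      Real.rpow_natCast]
    exact Real.rpow_le_rpow_of_nonpos (by positivity) h3 (by linarith)
  have h2 := hc (s.filter (fun i => Nat.log 2 (g i) = j)) (2 ^ (j + 1))
    (one_le_pow₀ (by norm_num)) (by
      intro i hi
      have hj := (Finset.mem_filter.1 hi).2
      have : g i < 2 ^ (j + 1) := by
        rw [← hj]; exact Nat.lt_pow_succ_log_self (by norm_num) _
      exact_mod_cast this.le)
  calc _ ≤ _ := Finset.sum_le_card_nsmul _ _ _ h1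
    _ = ((s.filter (fun i => Nat.log 2 (g i) = j)).card : ℝ) * ((2 : ℝ) ^ (-β)) ^ j := by
      rw [nsmul_eq_mul]
    _ ≤ (A * (2 ^ (j + 1)) ^ α) * ((2 : ℝ) ^ (-β)) ^ j := by gcongr
    _ = _ := by
      have e : ((2 : ℝ) ^ (j + 1)) ^ α = 2 ^ α * ((2 : ℝ) ^ α) ^ j := by
        rw [pow_succ, Real.mul_rpow (by positivity) (by norm_num), mul_comm,
          ← Real.rpow_natCast, ← Real.rpow_natCast, ← Real.rpow_mul (by norm_num),
          ← Real.rpow_mul (by norm_num), mul_comm (j : ℝ)]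
      rw [e, sub_eq_add_neg, Real.rpow_add (by norm_num), mul_pow]
      ring

lemma two_log_pow (_n j : ℕ) (c : ℝ) : ((2 : ℝ) ^ c) ^ j = ((2 : ℝ) ^ j) ^ c := by
  rw [← Real.rpow_natCast, ← Real.rpow_natCast, ← Real.rpow_mul (by norm_num),
          ← Real.rpow_mul (by norm_num), mul_comm (j : ℝ)]

lemma sum_tail {ι : Type*} (g : ι → ℕ) (hg : ∀ i, 1 ≤ g i) (A α β : ℝ) (hA : 0 ≤ A)
    (hβ : 0 ≤ β) (hab : α < β)
    (hc : ∀ (s : Finset ι) (y : ℝ), 1 ≤ y → (∀ i ∈ s, (g i : ℝ) ≤ y) → (s.card : ℝ) ≤ A * y ^ α) :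
    ∃ K : ℝ, 0 ≤ K ∧ ∀ (x : ℝ), 1 ≤ x → ∀ s : Finset ι, (∀ i ∈ s, x ≤ g i) →
      ∑ i ∈ s, (g i : ℝ) ^ (-β) ≤ K * x ^ (α - β) := by
  have hr1 : (2 : ℝ) ^ (α - β) < 1 := Real.rpow_lt_one_of_one_lt_of_neg (by norm_num) (by linarith)
  have hr0 : 0 < (2 : ℝ) ^ (α - β) := by positivity
  refine ⟨A * 2 ^ α * (2 ^ (β - α) / (1 - (2 : ℝ) ^ (α - β))), ?_, ?_⟩
  · have : 0 < 1 - (2 : ℝ) ^ (α - β) := by linarith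
    positivity
  intro x hx s hs
  set J0 := Nat.log 2 ⌊x⌋₊
  have hfx : ⌊x⌋₊ ≠ 0 := by
    have := (Nat.one_le_floor_iff x).2 hx
    omega
  have hJ : x < (2 : ℝ) ^ (J0 + 1) := by
    have := Nat.lt_pow_succ_log_self (b := 2) (by norm_num) ⌊x⌋₊
    have h2 := (Nat.floor_lt (by linarith)).1 this
    exact_mod_cast h2
  refine (log_core g hg A α β hβ hc s J0 (s.sup (fun i => Nat.log 2 (g i)) + 1) ?_).trans ?_
  · intro i hi
    refine ⟨Nat.log_mono_right ?_, Nat.lt_succ_of_le (Finset.le_sup (f := fun i => Nat.log 2 (g i)) hi)⟩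
    exact Nat.floor_le_of_le (hs i hi)
  rw [← Finset.mul_sum, mul_assoc]
  have h1 := geom_sum_Ico_le_of_lt_one (m := J0) (n := (s.sup (fun i => Nat.log 2 (g i)) + 1)) hr0.le hr1
  rw [mul_assoc, mul_assoc]
  gcongr
  refine h1.trans ?_
  rw [div_mul_eq_mul_div]
  have : 0 < 1 - (2 : ℝ) ^ (α - β) := by linarith
  gcongr
  have h3 : ((2 : ℝ) ^ (α - β)) ^ J0 = 2 ^ (β - α) * ((2 : ℝ) ^ (J0+1)) ^ (α - β) := by
    rw [← two_log_pow 0, pow_succ]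
    have : (2 : ℝ) ^ (β - α) * 2 ^ (α - β) = 1 := by
      rw [← Real.rpow_add (by norm_num)]; simp
    linear_combination (-((2 : ℝ) ^ (α - β)) ^ J0) * this
  rw [h3]
  gcongr ?_ * ?_
  exact Real.rpow_le_rpow_of_nonpos (by linarith) hJ.le (by linarith)

lemma sum_head {ι : Type*} (g : ι → ℕ) (hg : ∀ i, 1 ≤ g i) (A α β : ℝ) (hA : 0 ≤ A)
    (hβ : 0 ≤ β) (hab : β < α)
    (hc : ∀ (s : Finset ι) (y : ℝ), 1 ≤ y → (∀ i ∈ s, (g i : ℝ) ≤ y) → (s.card : ℝ) ≤ A * y ^ α) :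
    ∃ K : ℝ, 0 ≤ K ∧ ∀ (x : ℝ), 1 ≤ x → ∀ s : Finset ι, (∀ i ∈ s, g i ≤ x) →
      ∑ i ∈ s, (g i : ℝ) ^ (-β) ≤ K * x ^ (α - β) := by
  have hr1 : 1 < (2 : ℝ) ^ (α - β) := Real.one_lt_rpow (by norm_num) (by linarith)
  have hr2 : 0 < (2 : ℝ) ^ (α - β) - 1 := by linarith
  refine ⟨A * 2 ^ α * (2 ^ (α - β) / ((2 : ℝ) ^ (α - β) - 1)), by positivity, ?_⟩
  intro x hx s hs
  have hfx : ⌊x⌋₊ ≠ 0 := by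
    have := (Nat.one_le_floor_iff x).2 hx
    omega
  have hJ : (2 : ℝ) ^ (Nat.log 2 ⌊x⌋₊) ≤ x := by
    have := Nat.pow_log_le_self 2 hfx
    have h2 := (Nat.le_floor_iff (by linarith)).1 this
    exact_mod_cast h2
  refine (log_core g hg A α β hβ hc s 0 (Nat.log 2 ⌊x⌋₊ + 1) ?_).trans ?_
  · intro i hi
    exact ⟨Nat.zero_le _, Nat.lt_succ_of_le (Nat.log_mono_right (Nat.le_floor (hs i hi)))⟩
  rw [← Finset.mul_sum, mul_assoc, mul_assoc, mul_assoc, ← Finset.range_eq_Ico, geom_sum_eq hr1.ne']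
  gcongr
  rw [div_mul_eq_mul_div]
  gcongr
  rw [pow_succ, two_log_pow 0, mul_comm]
  have : ((2 : ℝ) ^ (Nat.log 2 ⌊x⌋₊)) ^ (α - β) ≤ x ^ (α - β) :=
    Real.rpow_le_rpow (by positivity) hJ (by linarith)
  nlinarith

lemma sum_mid {ι : Type*} (g : ι → ℕ) (hg : ∀ i, 1 ≤ g i) (A α : ℝ) (hA : 0 ≤ A)
    (hα : 0 ≤ α)
    (hc : ∀ (s : Finset ι) (y : ℝ), 1 ≤ y → (∀ i ∈ s, (g i : ℝ) ≤ y) → (s.card : ℝ) ≤ A * y ^ α) :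
    ∃ K : ℝ, 0 ≤ K ∧ ∀ (x : ℝ), 1 ≤ x → ∀ s : Finset ι, (∀ i ∈ s, g i ≤ x) →
      ∑ i ∈ s, (g i : ℝ) ^ (-α) ≤ K * (1 + Real.log x / Real.log 2) := by
  refine ⟨A * 2 ^ α, by positivity, ?_⟩
  intro x hx s hs
  have hfx : ⌊x⌋₊ ≠ 0 := by
    have := (Nat.one_le_floor_iff x).2 hx
    omega
  have hJ : (2 : ℝ) ^ (Nat.log 2 ⌊x⌋₊) ≤ x := by
    have := Nat.pow_log_le_self 2 hfx
    have h2 := (Nat.le_floor_iff (by linarith)).1 this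
    exact_mod_cast h2
  refine (log_core g hg A α α hα hc s 0 (Nat.log 2 ⌊x⌋₊ + 1) ?_).trans ?_
  · intro i hi
    exact ⟨Nat.zero_le _, Nat.lt_succ_of_le (Nat.log_mono_right (Nat.le_floor (hs i hi)))⟩
  rw [← Finset.mul_sum]
  gcongr
  simp only [sub_self, Real.rpow_zero, one_pow, Finset.sum_const, Nat.card_Ico, nsmul_eq_mul]
  have h3 := Real.log_le_log (by positivity) hJ
  rw [Real.log_pow] at h3
  have h4 : 0 < Real.log 2 := Real.log_pos (by norm_num)
  have := (le_div_iff₀ h4).2 h3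
  push_cast
  linarith

/-! Norm and decomposition -/

variable {P : Type*} 

lemma Nm_add (N : P → ℕ) (a b : P →₀ ℕ) : Nm N (a + b) = Nm N a * Nm N b := by
  unfold Nm
  exact Finsupp.prod_add_index' (by simp) (by intro p m n; exact pow_add _ _ _)

lemma Nm_zero (N : P → ℕ) : Nm N 0 = 1 := by simp [Nm]

lemma Nm_smul (N : P → ℕ) (k : ℕ) (a : P →₀ ℕ) : Nm N (k • a) = Nm N a ^ k := by
  induction k with
  | zero => simp [Nm_zero]
  | succ k ih => rw [succ_nsmul, Nm_add, ih, pow_succ]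

lemma Nm_pos (N : P → ℕ) (hN : ∀ p, 2 ≤ N p) (a : P →₀ ℕ) : 1 ≤ Nm N a := by
  unfold Nm Finsupp.prod
  exact Nat.pos_of_ne_zero (Finset.prod_ne_zero_iff.2 fun p _ =>
    pow_ne_zero _ (by have := hN p; omega))

def psi (h n : ℕ) : ℕ := if n % h = 0 then 0 else h + n % h

def tset (h : ℕ) : Finset ℕ := insert 0 (Finset.Ioo h (2 * h))

lemma psi_mem (h n : ℕ) (hh : 0 < h) : psi h n ∈ tset h := by
  unfold psi tset
  have := Nat.mod_lt n hh
  split_ifs with h0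
  · simp
  · simp; omega

lemma psi_eq (h a b : ℕ) (hb : b ∈ tset h) : psi h (h * a + b) = b := by
  unfold psi
  rw [Nat.mul_add_mod]
  simp only [tset, Finset.mem_insert, Finset.mem_Ioo] at hb
  rcases hb with rfl | ⟨h1, h2⟩
  · simp
  · obtain ⟨r, rfl⟩ := Nat.exists_eq_add_of_le h1.le
    rw [Nat.add_mod_left, Nat.mod_eq_of_lt (by omega), if_neg (by omega)]

lemma psi_le (h n : ℕ) (hn : n = 0 ∨ h ≤ n) : psi h n ≤ n := by
  unfold psi
  split_ifs with h0
  · omega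
  · rcases hn with rfl | hn
    · simp at h0
    · have := Nat.mod_le (n - h) h
      rw [Nat.mod_eq_sub_mod hn]
      omega

lemma psi_dvd (h n : ℕ) (hn : n = 0 ∨ h ≤ n) : h * ((n - psi h n) / h) + psi h n = n := by
  have h1 := psi_le h n hn
  have : h ∣ n - psi h n := by
    rw [← Nat.modEq_iff_dvd' h1]
    unfold psi Nat.ModEq
    split_ifs with h0
    · simp [h0]
    · simp
  rw [Nat.mul_div_cancel' this]
  omega

/-- B-elements -/
abbrev Bt (P : Type*) (h : ℕ) := {b : P →₀ ℕ // ∀ p, b p ∈ tset h}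


lemma fin_all (N : P → ℕ) (κ θ : ℝ) (hs : StarCond N κ θ) (x : ℝ) :
    {m : P →₀ ℕ | (Nm N m : ℝ) ≤ x}.Finite := by
  by_contra hx
  obtain ⟨hκ, h0, h1, hO⟩ := hs
  have h2 : (fun y : ℝ => (({m : P →₀ ℕ | (Nm N m : ℝ) ≤ y}.ncard : ℝ) - κ * y))
      =ᶠ[atTop] fun y => -κ * y := by
    filter_upwards [eventually_ge_atTop x] with y hy
    have : {m : P →₀ ℕ | (Nm N m : ℝ) ≤ y}.Infinite := by
      intro hf
      exact hx (hf.subset fun m hm => le_trans hm hy)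
    rw [this.ncard]
    simp
  have h3 := (h2.symm.isBigO).trans hO
  obtain ⟨c, hc⟩ := h3.bound
  have h4 := (tendsto_rpow_atTop (by linarith : 0 < 1 - θ)).eventually (eventually_gt_atTop (c / κ))
  obtain ⟨y, hy1, hy2, hy3⟩ := (hc.and (h4.and (eventually_gt_atTop 0))).exists
  have h5 : 0 < y ^ θ := Real.rpow_pos_of_pos hy3 _
  rw [Real.norm_eq_abs, Real.norm_eq_abs, abs_of_pos h5, neg_mul, abs_neg,
    abs_of_pos (by positivity)] at hy1
  have h6 : y ^ (1 - θ) * y ^ θ = y := by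
    rw [← Real.rpow_add hy3]; simp
  rw [div_lt_iff₀ hκ] at hy2
  have : c * y ^ θ < y ^ (1 - θ) * κ * y ^ θ := by gcongr
  nlinarith

lemma I_bound (N : P → ℕ) (κ θ : ℝ) (hs : StarCond N κ θ) :
    ∃ C : ℝ, 0 ≤ C ∧ ∀ y : ℝ, 1 ≤ y →
      |({m : P →₀ ℕ | (Nm N m : ℝ) ≤ y}.ncard : ℝ) - κ * y| ≤ C * y ^ θ := by
  have hfin := fin_all N κ θ hs
  obtain ⟨hκ, h0, h1, hO⟩ := hs
  obtain ⟨c, hc⟩ := hO.bound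
  obtain ⟨y0, hy0⟩ := eventually_atTop.1 hc
  set D : ℝ := ({m : P →₀ ℕ | (Nm N m : ℝ) ≤ y0}.ncard : ℝ) + κ * |y0| with hD
  have hD0 : 0 ≤ D := by positivity
  refine ⟨max c 0 + D, by positivity, fun y hy => ?_⟩
  have hyt : 1 ≤ y ^ θ := Real.one_le_rpow hy h0
  rcases le_total y0 y with h | h
  · have := hy0 y h
    rw [Real.norm_eq_abs, Real.norm_eq_abs, abs_of_nonneg (Real.rpow_nonneg (by linarith : (0:ℝ) ≤ y) θ)] at this
    have h5 : c * y ^ θ ≤ max c 0 * y ^ θ := by gcongr; exact le_max_left _ _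
    nlinarith
  · have h5 : {m : P →₀ ℕ | (Nm N m : ℝ) ≤ y}.ncard ≤ {m : P →₀ ℕ | (Nm N m : ℝ) ≤ y0}.ncard :=
      Set.ncard_le_ncard (fun m hm => le_trans hm h) (hfin y0)
    have h6 : ({m : P →₀ ℕ | (Nm N m : ℝ) ≤ y}.ncard : ℝ) ≤ {m : P →₀ ℕ | (Nm N m : ℝ) ≤ y0}.ncard := by
      exact_mod_cast h5
    have h7 : κ * y ≤ κ * |y0| := by gcongr; exact h.trans (le_abs_self _)
    have h8 : |({m : P →₀ ℕ | (Nm N m : ℝ) ≤ y}.ncard : ℝ) - κ * y| ≤ D := by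
      rw [abs_le]
      have : 0 ≤ κ * y := by positivity
      have : (0:ℝ) ≤ ({m : P →₀ ℕ | (Nm N m : ℝ) ≤ y}.ncard : ℝ) := by positivity
      constructor <;> linarith
    have : 0 ≤ max c 0 := le_max_right _ _
    nlinarith

lemma I_le (N : P → ℕ) (κ θ : ℝ) (hs : StarCond N κ θ) :
    ∃ C : ℝ, 0 ≤ C ∧ ∀ y : ℝ, 1 ≤ y →
      ({m : P →₀ ℕ | (Nm N m : ℝ) ≤ y}.ncard : ℝ) ≤ C * y := by
  obtain ⟨C, hC, hb⟩ := I_bound N κ θ hs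
  obtain ⟨hκ, h0, h1, hO⟩ := hs
  refine ⟨κ + C, by positivity, fun y hy => ?_⟩
  have h2 := (abs_le.1 (hb y hy)).2
  have h3 : y ^ θ ≤ y := by
    simpa using Real.rpow_le_rpow_of_exponent_le hy h1.le
  nlinarith

lemma Nm_ab_iff (N : P → ℕ) (hN : ∀ p, 2 ≤ N p) (h : ℕ) (hh : 1 ≤ h) (x : ℝ) (a b : P →₀ ℕ) :
    ((Nm N (h • a + b) : ℕ) : ℝ) ≤ x ↔
      (Nm N b : ℝ) ≤ x ∧ (Nm N a : ℝ) ≤ (x / Nm N b) ^ (1 / (h : ℝ)) := by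
  have ha : (1 : ℝ) ≤ Nm N a := by exact_mod_cast Nm_pos N hN a
  have hb : (1 : ℝ) ≤ Nm N b := by exact_mod_cast Nm_pos N hN b
  have hh' : (0 : ℝ) < h := by exact_mod_cast hh
  rw [Nm_add, Nm_smul]
  push_cast
  have key : ∀ z : ℝ, 0 ≤ z → ((Nm N a : ℝ) ≤ z ^ (1 / (h : ℝ)) ↔ (Nm N a : ℝ) ^ h ≤ z) := by
    intro z hz
    rw [one_div, Real.le_rpow_inv_iff_of_pos (by linarith) hz hh', Real.rpow_natCast]
  constructor
  · intro hx
    have h1 : (1 : ℝ) ≤ (Nm N a : ℝ) ^ h := one_le_pow₀ ha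
    have h2 : (Nm N b : ℝ) ≤ x := by nlinarith
    refine ⟨h2, (key _ (by apply div_nonneg <;> linarith)).2 ?_⟩
    rw [le_div_iff₀ (by linarith)]; exact hx
  · rintro ⟨h2, h3⟩
    rw [key _ (by apply div_nonneg <;> linarith), le_div_iff₀ (by linarith)] at h3
    exact h3

lemma count (N : P → ℕ) (hN : ∀ p, 2 ≤ N p)
    (hfin : ∀ x : ℝ, {m : P →₀ ℕ | (Nm N m : ℝ) ≤ x}.Finite) (h : ℕ) (hh : 1 ≤ h) (x : ℝ)
    (Bx : Finset (Bt P h)) (hB : ∀ b, b ∈ Bx ↔ (Nm N b.1 : ℝ) ≤ x) :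
    {m : P →₀ ℕ | HFull h m ∧ (Nm N m : ℝ) ≤ x}.ncard =
      ∑ b ∈ Bx, {a : P →₀ ℕ | (Nm N a : ℝ) ≤ (x / Nm N b.1) ^ (1 / (h : ℝ))}.ncard := by
  have hf : {m : P →₀ ℕ | HFull h m ∧ (Nm N m : ℝ) ≤ x}.Finite :=
    (hfin x).subset fun m hm => hm.2
  rw [Set.ncard_eq_toFinset_card _ hf]
  simp_rw [Set.ncard_eq_toFinset_card _ (hfin _)]
  rw [← Finset.card_sigma]
  symm
  refine Finset.card_bij (fun q _ => h • q.2 + q.1.1) ?_ ?_ ?_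
  · rintro ⟨b, a⟩ hq
    simp only [Finset.mem_sigma, hB, Set.Finite.mem_toFinset, Set.mem_ofPred_eq] at hq ⊢
    refine ⟨fun p => ?_, (Nm_ab_iff N hN h hh x a b.1).2 hq⟩
    have := b.2 p
    simp only [tset, Finset.mem_insert, Finset.mem_Ioo] at this
    simp only [Finsupp.add_apply, Finsupp.smul_apply, smul_eq_mul]
    rcases this with h0 | h0
    · rw [h0]
      rcases Nat.eq_zero_or_pos (a p) with h1 | h1
      · left; simp [h1]
      · right; nlinarith
    · right; omega
  · rintro ⟨b, a⟩ _ ⟨b', a'⟩ _ heq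
    have hp : ∀ p, h * a p + b.1 p = h * a' p + b'.1 p := fun p => by
      simpa using DFunLike.congr_fun heq p
    have hb : b = b' := by
      apply Subtype.ext
      ext p
      rw [← psi_eq h (a p) _ (b.2 p), hp, psi_eq h _ _ (b'.2 p)]
    subst hb
    have ha : a = a' := by
      ext p
      have := hp p
      exact Nat.eq_of_mul_eq_mul_left hh (by omega)
    rw [ha]
  · intro m hm
    simp only [Set.Finite.mem_toFinset, Set.mem_ofPred_eq] at hm
    have e : h • (m.mapRange (fun n => (n - psi h n) / h) (by simp)) +
        m.mapRange (psi h) (by simp [psi]) = m := by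
      ext p
      simpa using psi_dvd h (m p) (hm.1 p)
    refine ⟨⟨⟨m.mapRange (psi h) (by simp [psi]), fun p => ?_⟩,
      m.mapRange (fun n => (n - psi h n) / h) (by simp)⟩, ?_, ?_⟩
    · simpa using psi_mem h (m p) hh
    · simp only [Finset.mem_sigma, hB, Set.Finite.mem_toFinset, Set.mem_ofPred_eq]
      rw [← Nm_ab_iff N hN h hh x, e]
      exact hm.2
    · exact e

lemma prime_count (N : P → ℕ) (κ θ : ℝ) (hs : StarCond N κ θ) :
    ∃ A : ℝ, 0 ≤ A ∧ ∀ (s : Finset P) (y : ℝ), 1 ≤ y → (∀ i ∈ s, (N i : ℝ) ≤ y) →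
      (s.card : ℝ) ≤ A * y ^ (1 : ℝ) := by
  obtain ⟨C, hC, hb⟩ := I_le N κ θ hs
  refine ⟨C, hC, fun s y hy hsy => ?_⟩
  rw [Real.rpow_one]
  refine le_trans ?_ (hb y hy)
  have : s.card ≤ {m : P →₀ ℕ | (Nm N m : ℝ) ≤ y}.ncard := by
    rw [Set.ncard_eq_toFinset_card _ (fin_all N κ θ hs y)]
    refine Finset.card_le_card_of_injOn (fun p => Finsupp.single p 1) ?_ ?_
    · intro p hp
      simp [Nm]
      exact hsy p hp
    · intro p _ q _ hpq
      exact Finsupp.single_left_injective one_ne_zero hpq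
  exact_mod_cast this

/-- local factor -/
lemma factor (n h : ℕ) (hn : 2 ≤ n) (hh : 2 ≤ h) :
    ∑ k ∈ tset h, ((n : ℝ) ^ k) ^ (-(1 / (h : ℝ))) = 1 + ((n : ℝ) - (n : ℝ) ^ (1 / (h : ℝ))) /
    ((n : ℝ) ^ 2 * ((n : ℝ) ^ (1 / (h : ℝ)) - 1)) := by
  have hn' : (2 : ℝ) ≤ n := by exact_mod_cast hn
  have hh' : (2 : ℝ) ≤ h := by exact_mod_cast hh
  set u := (n : ℝ) ^ (1 / (h : ℝ)) with hu
  have hu1 : 1 < u := Real.one_lt_rpow (by linarith) (by positivity)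
  have hun : u ^ h = n := by
    rw [hu, one_div]; exact Real.rpow_inv_natCast_pow (by positivity) (by omega)
  have hw : ∀ k : ℕ, ((n : ℝ) ^ k) ^ (-(1 / (h : ℝ))) = (u⁻¹) ^ k := by
    intro k
    rw [Real.rpow_neg (by positivity), inv_pow, hu, ← Real.rpow_natCast, ← Real.rpow_natCast,
      ← Real.rpow_mul (by positivity), ← Real.rpow_mul (by positivity)]
    congr 2; ring
  simp_rw [hw]
  unfold tset
  rw [Finset.sum_insert (by simp), pow_zero]
  congr 1
  have : Finset.Ioo h (2 * h) = Finset.Ico (h + 1) (2 * h) := by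
    ext; simp only [Finset.mem_Ioo, Finset.mem_Ico]; omega
  have hu2 : u⁻¹ ≠ 1 := by
    intro hx
    rw [inv_eq_one] at hx
    linarith
  rw [this, geom_sum_Ico hu2 (by omega), ← hun]
  have h1 : u - 1 ≠ 0 := by linarith
  have h3 : u⁻¹ - 1 ≠ 0 := by
    intro hx; exact hu2 (by linarith)
  have h2 : u ≠ 0 := by linarith
  rw [div_eq_div_iff h3 (by positivity)]
  rw [two_mul, pow_add, pow_succ, inv_pow]
  have h4 : u ^ h ≠ 0 := by positivity
  generalize u ^ h = w at h4
  field_simp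
  ring

lemma factor_le (n h : ℕ) (hn : 2 ≤ n) (hh : 2 ≤ h) :
    ∑ k ∈ tset h, ((n : ℝ) ^ k) ^ (-(1 / (h : ℝ))) ≤ 1 + h * (n : ℝ) ^ (-(1 + 1 / (h : ℝ))) := by
  have hn' : (2 : ℝ) ≤ n := by exact_mod_cast hn
  have hh' : (2 : ℝ) ≤ h := by exact_mod_cast hh
  unfold tset
  rw [Finset.sum_insert (by simp)]
  simp only [pow_zero, Real.one_rpow]
  gcongr
  have : ∀ k ∈ Finset.Ioo h (2 * h), ((n : ℝ) ^ k) ^ (-(1 / (h : ℝ))) ≤ (n : ℝ) ^ (-(1 + 1 / (h : ℝ))) := by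
    intro k hk
    simp only [Finset.mem_Ioo] at hk
    rw [← Real.rpow_natCast, ← Real.rpow_mul (by positivity)]
    apply Real.rpow_le_rpow_of_exponent_le (by linarith)
    have hk' : (h : ℝ) + 1 ≤ k := by exact_mod_cast hk.1
    have e : 1 + 1 / (h : ℝ) = (h + 1) * (1 / h) := by field_simp
    rw [e]
    have : 0 ≤ 1 / (h : ℝ) := by positivity
    nlinarith
  refine (Finset.sum_le_card_nsmul _ _ _ this).trans ?_
  rw [nsmul_eq_mul]
  gcongr
  simp
  omega

def TS (h : ℕ) (S : Finset P) : Finset (Bt P h) :=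
  (S.finsupp fun _ => tset h).subtype (fun b : P →₀ ℕ => ∀ p, b p ∈ tset h)

lemma mem_TS (h : ℕ) (S : Finset P) (b : Bt P h) : b ∈ TS h S ↔ b.1.support ⊆ S := by
  simp only [TS, Finset.mem_subtype, Finset.mem_finsupp_iff]
  exact ⟨fun hb => hb.1, fun hb => ⟨hb, fun p _ => b.2 p⟩⟩

lemma prod_eq (N : P → ℕ) (h : ℕ) (S : Finset P) (c : ℝ) :
    ∏ p ∈ S, ∑ k ∈ tset h, ((N p : ℝ) ^ k) ^ c =
      ∑ b ∈ TS h S,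
        (Nm N b.1 : ℝ) ^ c := by
  unfold TS
  rw [Finset.sum_subtype_of_mem (fun b : P →₀ ℕ => (Nm N b : ℝ) ^ c)]
  swap
  · intro b hb p
    rw [Finset.mem_finsupp_iff] at hb
    by_cases hp : p ∈ S
    · exact hb.2 p hp
    · have : b p = 0 := by
        by_contra h0
        exact hp (hb.1 (Finsupp.mem_support_iff.2 h0))
      rw [this]; simp [tset]
  rw [Finset.prod_sum, Finset.finsupp, Finset.sum_map]
  refine Finset.sum_congr rfl fun f hf => ?_
  simp only [Function.Embedding.coeFn_mk]
  have hsup : (Finsupp.indicator S f).support ⊆ S := Finsupp.support_indicator_subset _ _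
  rw [Nm, Finsupp.prod_of_support_subset _ hsup _ (by simp), Nat.cast_prod,
    ← Real.finsetProd_rpow _ _ (by intros; positivity), ← Finset.prod_attach S]
  refine Finset.prod_congr rfl fun p _ => ?_
  rw [Finsupp.indicator_of_mem p.2]
  push_cast
  rfl

lemma B_sum (N : P → ℕ) (hN : ∀ p, 2 ≤ N p) (κ θ : ℝ) (hs : StarCond N κ θ) (h : ℕ) (hh : 2 ≤ h) :
    HasSum (fun b : Bt P h => (Nm N b.1 : ℝ) ^ (-(1 / (h : ℝ)))) (gammah N h) := by
  have hh' : (2 : ℝ) ≤ h := by exact_mod_cast hh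
  obtain ⟨A, hA, hc⟩ := prime_count N κ θ hs
  obtain ⟨K, hK, hK'⟩ := sum_tail N (fun p => (by norm_num : 1 ≤ 2).trans (hN p)) A 1 (1 + 1 / (h : ℝ)) hA
    (by positivity) (by have : 0 < 1 / (h : ℝ) := by positivity
                        linarith) hc
  have hmono : Monotone (fun S : Finset P => (TS h S : Finset (Bt P h))) := by
    intro S T hST b hb
    rw [mem_TS] at hb ⊢
    exact hb.trans hST
  have hmem : ∀ (b : Bt P h) (S : Finset P), b.1.support ⊆ S → b ∈ TS h S :=
    fun b S hS => (mem_TS h S b).2 hS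
  have hsum : Summable (fun b : Bt P h => (Nm N b.1 : ℝ) ^ (-(1 / (h : ℝ)))) := by
    refine summable_of_sum_le (c := Real.exp (h * (K * 1))) (fun b => by positivity) fun u => ?_
    set S := u.sup (fun b => b.1.support) with hS
    calc _ ≤ ∑ b ∈ TS h S,
        (Nm N b.1 : ℝ) ^ (-(1 / (h : ℝ))) := by
          refine Finset.sum_le_sum_of_subset_of_nonneg (fun b hb => hmem b S ?_)
            (fun b _ _ => by positivity)
          exact Finset.le_sup (f := fun b : Bt P h => b.1.support) hb
      _ = ∏ p ∈ S, ∑ k ∈ tset h, ((N p : ℝ) ^ k) ^ (-(1 / (h : ℝ))) := (prod_eq N h S _).symm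
      _ ≤ ∏ p ∈ S, (1 + h * (N p : ℝ) ^ (-(1 + 1 / (h : ℝ)))) := by
          refine Finset.prod_le_prod (fun p _ => by positivity) (fun p _ => factor_le _ _ (hN p) hh)
      _ ≤ ∏ p ∈ S, Real.exp (h * (N p : ℝ) ^ (-(1 + 1 / (h : ℝ)))) := by
          refine Finset.prod_le_prod (fun p _ => by positivity) (fun p _ => ?_)
          rw [add_comm]; exact Real.add_one_le_exp _
      _ = Real.exp (h * ∑ p ∈ S, (N p : ℝ) ^ (-(1 + 1 / (h : ℝ)))) := by
          rw [← Real.exp_sum, Finset.mul_sum]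
      _ ≤ _ := by
          gcongr
          have := hK' 1 le_rfl S (fun p _ => by
            have := hN p
            exact_mod_cast (by omega : 1 ≤ N p))
          simpa using this
  have hp : HasProd (fun p : P => (1 + ((N p : ℝ) - (N p : ℝ) ^ (1 / (h : ℝ))) /
      ((N p : ℝ) ^ 2 * ((N p : ℝ) ^ (1 / (h : ℝ)) - 1))))
      (∑' b : Bt P h, (Nm N b.1 : ℝ) ^ (-(1 / (h : ℝ)))) := by
    have h1 := hsum.hasSum
    unfold HasProd
    unfold HasSum at h1
    rw [SummationFilter.unconditional_filter] at h1 ⊢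
    have h2 : Tendsto (fun S : Finset P =>
      TS h S) atTop atTop :=
      Filter.tendsto_atTop_finset_of_monotone hmono (fun b => ⟨b.1.support, hmem b _ subset_rfl⟩)
    refine (h1.comp h2).congr fun S => ?_
    rw [Function.comp, ← prod_eq]
    exact Finset.prod_congr rfl fun p _ => factor _ _ (hN p) hh
  have : gammah N h = ∑' b : Bt P h, (Nm N b.1 : ℝ) ^ (-(1 / (h : ℝ))) := hp.tprod_eq
  rw [this]
  exact hsum.hasSum

lemma B_fin (N : P → ℕ) (κ θ : ℝ) (hs : StarCond N κ θ) (h : ℕ) (x : ℝ) :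
    ∃ Bx : Finset (Bt P h), ∀ b, b ∈ Bx ↔ (Nm N b.1 : ℝ) ≤ x := by
  have : {b : Bt P h | (Nm N b.1 : ℝ) ≤ x}.Finite :=
    (fin_all N κ θ hs x).preimage (Subtype.val_injective.injOn)
  exact ⟨this.toFinset, fun b => by simp⟩

lemma B_count (N : P → ℕ) (hN : ∀ p, 2 ≤ N p) (κ θ : ℝ) (hs : StarCond N κ θ) (h : ℕ) (hh : 2 ≤ h) :
    ∃ A : ℝ, 0 ≤ A ∧ ∀ (s : Finset (Bt P h)) (y : ℝ), 1 ≤ y → (∀ i ∈ s, (Nm N i.1 : ℝ) ≤ y) →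
      (s.card : ℝ) ≤ A * y ^ (1 / ((h : ℝ) + 1)) := by
  obtain ⟨C, hC, hb⟩ := I_le N κ θ hs
  have hS := B_sum N hN κ θ hs (h + 1) (by omega)
  have hg0 : 0 ≤ gammah N (h + 1) := hS.nonneg fun b => by positivity
  refine ⟨C * gammah N (h + 1), by positivity, fun s y hy hsy => ?_⟩
  obtain ⟨Bx, hB⟩ := B_fin N κ θ hs (h + 1) y
  have hf : {m : P →₀ ℕ | HFull (h + 1) m ∧ (Nm N m : ℝ) ≤ y}.Finite :=
    (fin_all N κ θ hs y).subset fun m hm => hm.2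
  have h1 : s.card ≤ {m : P →₀ ℕ | HFull (h + 1) m ∧ (Nm N m : ℝ) ≤ y}.ncard := by
    rw [Set.ncard_eq_toFinset_card _ hf]
    refine Finset.card_le_card_of_injOn (fun b => b.1) ?_ (Subtype.val_injective.injOn)
    intro b hb
    simp only [Set.Finite.coe_toFinset]
    refine ⟨fun p => ?_, hsy b hb⟩
    have := b.2 p
    simp only [tset, Finset.mem_insert, Finset.mem_Ioo] at this
    omega
  rw [count N hN (fin_all N κ θ hs) (h + 1) (by omega) y Bx hB] at h1
  have h2 : (s.card : ℝ) ≤ ∑ b ∈ Bx, ({a : P →₀ ℕ | (Nm N a : ℝ) ≤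
      (y / Nm N b.1) ^ (1 / ((h + 1 : ℕ) : ℝ))}.ncard : ℝ) := by exact_mod_cast h1
  refine h2.trans ?_
  calc _ ≤ ∑ b ∈ Bx, C * (y ^ (1 / ((h : ℝ) + 1)) * (Nm N b.1 : ℝ) ^ (-(1 / ((h + 1 : ℕ) : ℝ)))) := by
        refine Finset.sum_le_sum fun b hbx => ?_
        have hp : (1 : ℝ) ≤ Nm N b.1 := by exact_mod_cast Nm_pos N hN b.1
        refine (hb _ (Real.one_le_rpow ?_ (by positivity))).trans ?_
        · rw [le_div_iff₀ (by linarith), one_mul]; exact (hB b).1 hbx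
        · rw [Real.div_rpow (by linarith) (by linarith), Real.rpow_neg (by linarith)]
          push_cast
          rw [div_eq_mul_inv]
    _ = C * y ^ (1 / ((h : ℝ) + 1)) * ∑ b ∈ Bx, (Nm N b.1 : ℝ) ^ (-(1 / ((h + 1 : ℕ) : ℝ))) := by
        rw [Finset.mul_sum]; refine Finset.sum_congr rfl fun b _ => by ring
    _ ≤ C * y ^ (1 / ((h : ℝ) + 1)) * gammah N (h + 1) := by
        gcongr
        exact sum_le_hasSum Bx (fun b _ => by positivity) hS
    _ = _ := by ring

lemma main_bound (N : P → ℕ) (hN : ∀ p, 2 ≤ N p) (κ θ : ℝ) (hs : StarCond N κ θ) (h : ℕ)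
    (hh : 2 ≤ h) :
    ∃ C K : ℝ, 0 ≤ C ∧ 0 ≤ K ∧ ∀ x : ℝ, 1 ≤ x → ∃ Bx : Finset (Bt P h),
      (∀ b ∈ Bx, (Nm N b.1 : ℝ) ≤ x) ∧
      |({m : P →₀ ℕ | HFull h m ∧ (Nm N m : ℝ) ≤ x}.ncard : ℝ)
          - κ * gammah N h * x ^ (1 / (h : ℝ))| ≤
        C * x ^ (θ / h) * ∑ b ∈ Bx, (Nm N b.1 : ℝ) ^ (-(θ / h)) + K * x ^ (1 / ((h : ℝ) + 1)) := by
  obtain ⟨C, hC, hb⟩ := I_bound N κ θ hs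
  have hκ : 0 < κ := hs.1
  have hθ : 0 ≤ θ := hs.2.1
  have hS := B_sum N hN κ θ hs h hh
  obtain ⟨A, hA, hc⟩ := B_count N hN κ θ hs h hh
  have hh' : (2 : ℝ) ≤ h := by exact_mod_cast hh
  obtain ⟨K, hK, ht⟩ := sum_tail (fun b : Bt P h => Nm N b.1) (fun b => Nm_pos N hN b.1) A
    (1 / ((h : ℝ) + 1)) (1 / (h : ℝ)) hA (by positivity)
    (one_div_lt_one_div_of_lt (by linarith) (by linarith)) hc
  refine ⟨C, κ * K, hC, by positivity, fun x hx => ?_⟩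
  have hx0 : 0 < x := by linarith
  obtain ⟨Bx, hB⟩ := B_fin N κ θ hs h x
  refine ⟨Bx, fun b hbx => (hB b).1 hbx, ?_⟩
  rw [count N hN (fin_all N κ θ hs) h (by omega) x Bx hB]
  push_cast
  have hp : ∀ b : Bt P h, (1 : ℝ) ≤ Nm N b.1 := fun b => by exact_mod_cast Nm_pos N hN b.1
  have hy : ∀ b : Bt P h, (x / Nm N b.1) ^ (1 / (h : ℝ)) =
      x ^ (1 / (h : ℝ)) * (Nm N b.1 : ℝ) ^ (-(1 / (h : ℝ))) := by
    intro b
    have := hp b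
    rw [Real.div_rpow (by linarith) (by linarith), Real.rpow_neg (by linarith), div_eq_mul_inv]
  have hyt : ∀ b : Bt P h, ((x / Nm N b.1) ^ (1 / (h : ℝ))) ^ θ =
      x ^ (θ / h) * (Nm N b.1 : ℝ) ^ (-(θ / h)) := by
    intro b
    have := hp b
    rw [← Real.rpow_mul (by positivity), one_div_mul_eq_div, Real.div_rpow (by linarith) (by linarith),
      Real.rpow_neg (by linarith), div_eq_mul_inv]
  have e1 : |∑ b ∈ Bx, (({a : P →₀ ℕ | (Nm N a : ℝ) ≤ (x / Nm N b.1) ^ (1 / (h : ℝ))}.ncard : ℝ)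
      - κ * (x / Nm N b.1) ^ (1 / (h : ℝ)))| ≤
      C * x ^ (θ / h) * ∑ b ∈ Bx, (Nm N b.1 : ℝ) ^ (-(θ / h)) := by
    refine (Finset.abs_sum_le_sum_abs _ _).trans ?_
    rw [Finset.mul_sum]
    refine Finset.sum_le_sum fun b hbx => ?_
    have := hp b
    refine (hb _ (Real.one_le_rpow ?_ (by positivity))).trans ?_
    · rw [le_div_iff₀ (by linarith), one_mul]; exact (hB b).1 hbx
    · rw [hyt, mul_assoc]
  have e2 : gammah N h ≤ ∑ b ∈ Bx, (Nm N b.1 : ℝ) ^ (-(1 / (h : ℝ))) +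
      K * x ^ (1 / ((h : ℝ) + 1) - 1 / (h : ℝ)) := by
    rw [← hS.tsum_eq]
    refine hS.summable.tsum_le_of_sum_le fun s => ?_
    have h1 := ht x hx (s \ Bx) (fun b hb' => by
      have := (Finset.mem_sdiff.1 hb').2
      rw [hB] at this
      linarith)
    have h2 : ∑ b ∈ s ∩ Bx, (Nm N b.1 : ℝ) ^ (-(1 / (h : ℝ))) ≤
        ∑ b ∈ Bx, (Nm N b.1 : ℝ) ^ (-(1 / (h : ℝ))) :=
      Finset.sum_le_sum_of_subset_of_nonneg Finset.inter_subset_right (fun b _ _ => by positivity)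
    rw [← Finset.sum_inter_add_sum_sdiff s Bx]
    linarith
  have e3 : ∑ b ∈ Bx, (Nm N b.1 : ℝ) ^ (-(1 / (h : ℝ))) ≤ gammah N h :=
    sum_le_hasSum Bx (fun b _ => by positivity) hS
  have e4 : x ^ (1 / (h : ℝ)) * x ^ (1 / ((h : ℝ) + 1) - 1 / (h : ℝ)) = x ^ (1 / ((h : ℝ) + 1)) := by
    rw [← Real.rpow_add hx0]; congr 1; ring
  have hX : 0 < x ^ (1 / (h : ℝ)) := by positivity
  have e5 : ∑ b ∈ Bx, κ * (x / Nm N b.1) ^ (1 / (h : ℝ)) =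
      κ * x ^ (1 / (h : ℝ)) * ∑ b ∈ Bx, (Nm N b.1 : ℝ) ^ (-(1 / (h : ℝ))) := by
    rw [Finset.mul_sum]
    refine Finset.sum_congr rfl fun b _ => by rw [hy]; ring
  rw [Finset.sum_sub_distrib, e5] at e1
  set G := ∑ b ∈ Bx, (Nm N b.1 : ℝ) ^ (-(1 / (h : ℝ)))
  have hkX : 0 < κ * x ^ (1 / (h : ℝ)) := by positivity
  have e6 := mul_le_mul_of_nonneg_left e2 hkX.le
  have e7 := mul_le_mul_of_nonneg_left e3 hkX.le
  have e8 : κ * x ^ (1 / (h : ℝ)) * (K * x ^ (1 / ((h : ℝ) + 1) - 1 / (h : ℝ))) =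
    κ * K * x ^ (1 / ((h : ℝ) + 1)) := by rw [← e4]; ring
  rw [mul_add, e8] at e6
  have e9 : κ * gammah N h * x ^ (1 / (h : ℝ)) = κ * x ^ (1 / (h : ℝ)) * gammah N h := by ring
  have e10 : 0 ≤ κ * K * x ^ (1 / ((h : ℝ) + 1)) := by positivity
  rw [e9]
  rw [abs_le] at e1 ⊢
  constructor <;> linarith [e1.1, e1.2]

end HF

/-- Distribution of `h`-full elements (Theorem 1.1 / `hfullideals`). -/
theorem hfull_count {P : Type*} [Countable P] (N : P → ℕ) (hN : ∀ p, 2 ≤ N p)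
    (κ θ : ℝ) (hstar : StarCond N κ θ) (h : ℕ) (hh : 2 ≤ h) :
    ∃ C : ℝ, ∀ᶠ x : ℝ in atTop,
      |({m : P →₀ ℕ | HFull h m ∧ (Nm N m : ℝ) ≤ x}.ncard : ℝ)
          - κ * gammah N h * x ^ (1 / (h : ℝ))| ≤ C * RNfull h θ x := by
  obtain ⟨C, K, hC, hK, hmain⟩ := HF.main_bound N hN κ θ hstar h hh
  obtain ⟨A, hA, hc⟩ := HF.B_count N hN κ θ hstar h hh
  have hθ : 0 ≤ θ := hstar.2.1
  have hh' : (2 : ℝ) ≤ h := by exact_mod_cast hh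
  have hg : ∀ b : HF.Bt P h, 1 ≤ Nm N b.1 := fun b => HF.Nm_pos N hN b.1
  rcases lt_trichotomy ((h : ℝ) / ((h : ℝ) + 1)) θ with hlt | heq | hgt
  · have hab : 1 / ((h : ℝ) + 1) < θ / h := by
      rw [div_lt_div_iff₀ (by linarith) (by linarith)]
      rw [div_lt_iff₀ (by linarith)] at hlt
      linarith
    obtain ⟨L, hL, ht⟩ := HF.sum_tail (fun b : HF.Bt P h => Nm N b.1) hg A
      (1 / ((h : ℝ) + 1)) (θ / h) hA (by positivity) hab hc
    refine ⟨C * L + K, ?_⟩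
    filter_upwards [eventually_ge_atTop 1] with x hx
    obtain ⟨Bx, hB, hm⟩ := hmain x hx
    refine hm.trans ?_
    rw [RNfull, if_pos hlt]
    have h1 := ht 1 le_rfl Bx (fun b _ => by exact_mod_cast hg b)
    rw [Real.one_rpow, mul_one] at h1
    have h2 : x ^ (1 / ((h : ℝ) + 1)) ≤ x ^ (θ / h) := Real.rpow_le_rpow_of_exponent_le hx hab.le
    calc _ ≤ C * x ^ (θ / h) * L + K * x ^ (θ / h) := by gcongr
      _ = _ := by ring
  · have hab : θ / h = 1 / ((h : ℝ) + 1) := by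
      rw [← heq]; field_simp
    obtain ⟨L, hL, ht⟩ := HF.sum_mid (fun b : HF.Bt P h => Nm N b.1) hg A
      (1 / ((h : ℝ) + 1)) hA (by positivity) hc
    refine ⟨C * (L * (1 + 1 / Real.log 2)) + K, ?_⟩
    filter_upwards [eventually_ge_atTop 1, Real.tendsto_log_atTop.eventually (eventually_ge_atTop 1)]
      with x hx hx2
    obtain ⟨Bx, hB, hm⟩ := hmain x hx
    refine hm.trans ?_
    rw [RNfull, if_neg heq.not_lt, if_pos ⟨1, le_rfl, by omega, by rw [← heq]; simp⟩, hab]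
    have h1 := ht x hx Bx hB
    have hlog2 : 0 < Real.log 2 := Real.log_pos (by norm_num)
    calc _ ≤ C * x ^ (1 / ((h : ℝ) + 1)) * (L * (Real.log x + Real.log x / Real.log 2)) +
          K * (x ^ (1 / ((h : ℝ) + 1)) * Real.log x) := by
            have : x ^ (1 / ((h : ℝ) + 1)) * 1 ≤ x ^ (1 / ((h : ℝ) + 1)) * Real.log x := by gcongr
            rw [mul_one] at this
            gcongr
            refine h1.trans ?_
            gcongr
      _ = _ := by ring
  · have hab : θ / h < 1 / ((h : ℝ) + 1) := by
      rw [div_lt_div_iff₀ (by linarith) (by linarith)]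
      rw [lt_div_iff₀ (by linarith)] at hgt
      linarith
    obtain ⟨L, hL, ht⟩ := HF.sum_head (fun b : HF.Bt P h => Nm N b.1) hg A
      (1 / ((h : ℝ) + 1)) (θ / h) hA (by positivity) hab hc
    refine ⟨C * L + K, ?_⟩
    filter_upwards [eventually_ge_atTop 1, Real.tendsto_log_atTop.eventually (eventually_ge_atTop 1)]
      with x hx hx2
    obtain ⟨Bx, hB, hm⟩ := hmain x hx
    refine hm.trans ?_
    have h1 := ht x hx Bx hB
    have h2 : x ^ (θ / h) * x ^ (1 / ((h : ℝ) + 1) - θ / h) = x ^ (1 / ((h : ℝ) + 1)) := by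
      rw [← Real.rpow_add (by linarith)]; congr 1; ring
    have h3 : C * x ^ (θ / h) * ∑ b ∈ Bx, (Nm N b.1 : ℝ) ^ (-(θ / h)) +
        K * x ^ (1 / ((h : ℝ) + 1)) ≤ (C * L + K) * x ^ (1 / ((h : ℝ) + 1)) := by
      calc _ ≤ C * x ^ (θ / h) * (L * x ^ (1 / ((h : ℝ) + 1) - θ / h)) +
            K * x ^ (1 / ((h : ℝ) + 1)) := by gcongr
        _ = C * L * (x ^ (θ / h) * x ^ (1 / ((h : ℝ) + 1) - θ / h)) +
            K * x ^ (1 / ((h : ℝ) + 1)) := by ring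
        _ = _ := by rw [h2]; ring
    refine h3.trans ?_
    have h4 : x ^ (1 / ((h : ℝ) + 1)) * 1 ≤ x ^ (1 / ((h : ℝ) + 1)) * Real.log x := by gcongr
    rw [mul_one] at h4
    rw [RNfull, if_neg (not_lt.2 hgt.le)]
    split_ifs
    · gcongr
    · exact le_rfl
end
end

section
/- Under Condition (★), for every integer h ≥ 2, ∑_{m ∈ S_h(x)} ω(m) = (κ/ζ_M(h))·x·log log x + (κ·ℭ₁/ζ_M(h))·x + O_h(x/log x) as x → ∞, where the implied constant depends only on h and on the data P, N, κ, θ. -/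
open Filter Topology Asymptotics
open scoped Classical

noncomputable section

/-- `F x` enumerates the indices of norm at most `x`. -/
def LFin {ι : Type*} (ν : ι → ℕ) (F : ℝ → Finset ι) : Prop :=
  ∀ x i, i ∈ F x ↔ (ν i : ℝ) ≤ x

lemma LFin.mono {ι : Type*} {ν : ι → ℕ} {F : ℝ → Finset ι} (hF : LFin ν F) {x y : ℝ}
    (hxy : x ≤ y) : F x ⊆ F y := by
  intro i hi
  rw [hF] at *
  exact hi.trans hxy

lemma LFin.empty {ι : Type*} {ν : ι → ℕ} {F : ℝ → Finset ι} (hF : LFin ν F)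
    (hν : ∀ i, 1 ≤ ν i) {x : ℝ} (hx : x < 1) : F x = ∅ := by
  apply Finset.eq_empty_of_forall_notMem
  intro i hi
  rw [hF] at hi
  have : (1 : ℝ) ≤ ν i := by exact_mod_cast hν i
  linarith

lemma lemW {ι : Type*} {ν : ι → ℕ} {F : ℝ → Finset ι} (hF : LFin ν F)
    (hν : ∀ i, 1 ≤ ν i) (w : ι → ℝ) (hw : ∀ i, 0 ≤ w i) (B : ℝ) (hB0 : 0 ≤ B)
    (hB : ∀ x : ℝ, 1 ≤ x → ∑ i ∈ F x, w i ≤ B * x) (τ : ℝ) (h0 : 0 ≤ τ) (h1 : τ < 1) :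
    ∃ K : ℝ, 0 ≤ K ∧ ∀ x : ℝ, 0 < x → ∑ i ∈ F x, w i * (x / ν i) ^ τ ≤ K * x := by
  set r : ℝ := 2 ^ τ with hr
  have hr1 : 1 ≤ r := Real.one_le_rpow (by norm_num) h0
  have hr2 : r < 2 := by
    calc r < 2 ^ (1 : ℝ) := Real.rpow_lt_rpow_of_exponent_lt (by norm_num) h1
      _ = 2 := by norm_num
  refine ⟨2 * r * B / (2 - r), by apply div_nonneg <;> nlinarith, ?_⟩
  set K := 2 * r * B / (2 - r) with hK
  have hK0 : 0 ≤ K := by apply div_nonneg <;> nlinarith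
  have hKe : K * (2 - r) = 2 * r * B := by
    rw [hK]; field_simp [show (2 - r) ≠ 0 by linarith]
  have key : ∀ n : ℕ, ∀ x : ℝ, 0 < x → x < 2 ^ n →
      ∑ i ∈ F x, w i * (x / ν i) ^ τ ≤ K * x := by
    intro n
    induction n with
    | zero =>
      intro x hx hx1
      rw [hF.empty hν (by simpa using hx1)]
      simp; positivity
    | succ n ih =>
      intro x hx hx1
      rcases lt_or_ge x 1 with hlt | hge
      · rw [hF.empty hν hlt]
        simp; positivity
      have hsub : F (x / 2) ⊆ F x := hF.mono (by linarith)
      rw [← Finset.sum_sdiff hsub]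
      have e1 : ∑ i ∈ F (x / 2), w i * (x / ν i) ^ τ
          = r * ∑ i ∈ F (x / 2), w i * (x / 2 / ν i) ^ τ := by
        rw [Finset.mul_sum]
        apply Finset.sum_congr rfl
        intro i _
        have : x / ν i = 2 * (x / 2 / ν i) := by ring
        rw [this, Real.mul_rpow (by norm_num) (by positivity)]
        ring
      have e2 : ∑ i ∈ F (x / 2), w i * (x / 2 / ν i) ^ τ ≤ K * (x / 2) :=
        ih (x / 2) (by linarith) (by rw [pow_succ] at hx1; linarith)
      have e3 : ∑ i ∈ F x \ F (x / 2), w i * (x / ν i) ^ τ ≤ r * (B * x) := by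
        calc ∑ i ∈ F x \ F (x / 2), w i * (x / ν i) ^ τ
            ≤ ∑ i ∈ F x \ F (x / 2), w i * r := by
              apply Finset.sum_le_sum
              intro i hi
              rw [Finset.mem_sdiff, hF, hF] at hi
              apply mul_le_mul_of_nonneg_left _ (hw i)
              apply Real.rpow_le_rpow (by positivity) _ h0
              have : (0 : ℝ) < ν i := by exact_mod_cast hν i
              rw [div_le_iff₀ this]
              linarith [hi.2]
          _ ≤ ∑ i ∈ F x, w i * r := by
              apply Finset.sum_le_sum_of_subset_of_nonneg Finset.sdiff_subset
              intro i _ _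
              exact mul_nonneg (hw i) (by linarith)
          _ = r * ∑ i ∈ F x, w i := by rw [← Finset.sum_mul, mul_comm]
          _ ≤ r * (B * x) := by
              apply mul_le_mul_of_nonneg_left (hB x hge) (by linarith)
      rw [e1]
      nlinarith [mul_le_mul_of_nonneg_left e2 (show 0 ≤ r by linarith)]
  intro x hx
  obtain ⟨n, hn⟩ := pow_unbounded_of_one_lt x (show (1 : ℝ) < 2 by norm_num)
  exact key n x hx hn

lemma lemV {ι : Type*} {ν : ι → ℕ} {F : ℝ → Finset ι} (hF : LFin ν F)
    (hν : ∀ i, 1 ≤ ν i) (B : ℝ) (hB0 : 0 ≤ B)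
    (hB : ∀ x : ℝ, 1 ≤ x → ((F x).card : ℝ) ≤ B * x) (s : ℝ) (h1 : 1 < s) :
    Summable fun i => (ν i : ℝ) ^ (-s) := by
  set r : ℝ := 2 ^ (1 - s) with hr
  have hr0 : 0 < r := by positivity
  have hr1 : r < 1 := Real.rpow_lt_one_of_one_lt_of_neg (by norm_num) (by linarith)
  have hnn : ∀ i, 0 ≤ (ν i : ℝ) ^ (-s) := fun i => by positivity
  have key : ∀ n : ℕ, ∑ i ∈ F (2 ^ n), (ν i : ℝ) ^ (-s)
      ≤ B + 2 * B * ∑ j ∈ Finset.range n, r ^ j := by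
    intro n
    induction n with
    | zero =>
      simp only [pow_zero, Finset.range_zero, Finset.sum_empty, mul_zero, add_zero]
      calc ∑ i ∈ F 1, (ν i : ℝ) ^ (-s) ≤ ∑ i ∈ F 1, 1 := by
            apply Finset.sum_le_sum
            intro i _
            apply Real.rpow_le_one_of_one_le_of_nonpos
            · exact_mod_cast hν i
            · linarith
        _ = ((F 1).card : ℝ) := by simp
        _ ≤ B := by simpa using hB 1 le_rfl
    | succ n ih =>
      have hp : (0 : ℝ) < 2 ^ n := by positivity
      have hsub : F (2 ^ n) ⊆ F (2 ^ (n + 1)) := hF.mono (by rw [pow_succ]; linarith)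
      rw [← Finset.sum_sdiff hsub, Finset.sum_range_succ]
      have e3 : ∑ i ∈ F (2 ^ (n + 1)) \ F (2 ^ n), (ν i : ℝ) ^ (-s) ≤ 2 * B * r ^ n := by
        calc ∑ i ∈ F (2 ^ (n + 1)) \ F (2 ^ n), (ν i : ℝ) ^ (-s)
            ≤ ∑ i ∈ F (2 ^ (n + 1)) \ F (2 ^ n), ((2 : ℝ) ^ n) ^ (-s) := by
              apply Finset.sum_le_sum
              intro i hi
              rw [Finset.mem_sdiff, hF, hF] at hi
              apply Real.rpow_le_rpow_of_nonpos hp (by linarith [hi.2]) (by linarith)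
          _ ≤ ∑ i ∈ F (2 ^ (n + 1)), ((2 : ℝ) ^ n) ^ (-s) := by
              apply Finset.sum_le_sum_of_subset_of_nonneg Finset.sdiff_subset
              intro i _ _
              positivity
          _ = ((F (2 ^ (n + 1))).card : ℝ) * ((2 : ℝ) ^ n) ^ (-s) := by simp
          _ ≤ (B * 2 ^ (n + 1)) * ((2 : ℝ) ^ n) ^ (-s) := by
              apply mul_le_mul_of_nonneg_right (hB _ (one_le_pow₀ (by norm_num))) (by positivity)
          _ = 2 * B * r ^ n := by
              have : r ^ n = 2 ^ n * ((2 : ℝ) ^ n) ^ (-s) := by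
                rw [hr, ← Real.rpow_natCast, ← Real.rpow_natCast, ← Real.rpow_mul (by norm_num),
                  ← Real.rpow_mul (by norm_num), ← Real.rpow_add (by norm_num)]
                congr 1; ring
              rw [this]; ring
      linarith
  apply summable_of_sum_le (c := B + 2 * B * (1 - r)⁻¹) hnn
  intro u
  obtain ⟨n, hn⟩ : ∃ n : ℕ, u ⊆ F (2 ^ n) := by
    obtain ⟨n, hn⟩ := pow_unbounded_of_one_lt (∑ i ∈ u, (ν i : ℝ)) (show (1 : ℝ) < 2 by norm_num)
    refine ⟨n, fun i hi => ?_⟩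
    rw [hF]
    have := Finset.single_le_sum (f := fun i => (ν i : ℝ)) (fun i _ => by positivity) hi
    linarith
  have hg : ∑ j ∈ Finset.range n, r ^ j ≤ (1 - r)⁻¹ := by
    rw [← tsum_geometric_of_lt_one hr0.le hr1]
    exact (summable_geometric_of_lt_one hr0.le hr1).sum_le_tsum _ (fun i _ => by positivity)
  calc ∑ i ∈ u, (ν i : ℝ) ^ (-s) ≤ ∑ i ∈ F (2 ^ n), (ν i : ℝ) ^ (-s) :=
        Finset.sum_le_sum_of_subset_of_nonneg hn (fun i _ _ => hnn i)
    _ ≤ _ := key n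
    _ ≤ _ := by gcongr

lemma abelIcc {ι : Type*} {ν : ι → ℕ} {F : ℝ → Finset ι} (hF : LFin ν F) (w : ι → ℝ)
    {b t : ℝ} (ht0 : 0 ≤ t) (htb : t ≤ b) :
    ∑ k ∈ Finset.Icc 0 ⌊t⌋₊, ∑ i ∈ (F b).filter (fun i => ν i = k), w i
      = ∑ i ∈ F t, w i := by
  have hb0 : 0 ≤ b := ht0.trans htb
  have : F t = (F b).filter (fun i => ν i ∈ Finset.Icc 0 ⌊t⌋₊) := by
    ext i
    rw [Finset.mem_filter, hF, hF, Finset.mem_Icc, Nat.le_floor_iff ht0]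
    constructor
    · intro h; exact ⟨h.trans htb, Nat.zero_le _, h⟩
    · intro h; exact h.2.2
  rw [this, Finset.sum_filter]
  simp_rw [Finset.sum_filter]
  rw [Finset.sum_comm]
  apply Finset.sum_congr rfl
  intro i _
  rw [Finset.sum_ite_eq]

lemma abelInt {ι : Type*} {ν : ι → ℕ} {F : ℝ → Finset ι} (hF : LFin ν F) (w : ι → ℝ)
    {a b : ℝ} (ha : 0 ≤ a) (g : ℝ → ℝ)
    (hg : MeasureTheory.IntegrableOn g (Set.Icc a b)) :
    MeasureTheory.IntegrableOn (fun t => g t * ∑ i ∈ F t, w i) (Set.Icc a b) := by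
  have := integrableOn_mul_sum_Icc
    (fun k => ∑ i ∈ (F b).filter (fun i => ν i = k), w i) (m := 0) ha hg
  apply this.congr_fun _ measurableSet_Icc
  intro t ht
  simp only
  rw [abelIcc hF w (ha.trans ht.1) ht.2]

lemma abel_sum {ι : Type*} {ν : ι → ℕ} {F : ℝ → Finset ι} (hF : LFin ν F) (w : ι → ℝ)
    {a b : ℝ} (ha : 0 ≤ a) (hab : a ≤ b) (f : ℝ → ℝ)
    (hf_diff : ∀ t ∈ Set.Icc a b, DifferentiableAt ℝ f t)
    (hf_int : MeasureTheory.IntegrableOn (deriv f) (Set.Icc a b)) :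
    ∑ i ∈ F b, w i * f (ν i) - ∑ i ∈ F a, w i * f (ν i) =
      f b * (∑ i ∈ F b, w i) - f a * (∑ i ∈ F a, w i) -
        ∫ t in Set.Ioc a b, deriv f t * ∑ i ∈ F t, w i := by
  have h := sum_mul_eq_sub_sub_integral_mul
    (fun k => ∑ i ∈ (F b).filter (fun i => ν i = k), w i) ha hab hf_diff hf_int
  rw [abelIcc hF w (ha.trans hab) le_rfl, abelIcc hF w ha hab] at h
  have h2 : ∫ t in Set.Ioc a b, deriv f t * ∑ k ∈ Finset.Icc 0 ⌊t⌋₊,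
      ∑ i ∈ (F b).filter (fun i => ν i = k), w i
      = ∫ t in Set.Ioc a b, deriv f t * ∑ i ∈ F t, w i := by
    apply MeasureTheory.setIntegral_congr_fun measurableSet_Ioc
    intro t ht
    simp only
    rw [abelIcc hF w (ha.trans ht.1.le) ht.2]
  rw [h2] at h
  rw [← h, sub_eq_iff_eq_add, ← Finset.sum_sdiff (hF.mono hab)]
  congr 1
  have : F b \ F a = (F b).filter (fun i => ν i ∈ Finset.Ioc ⌊a⌋₊ ⌊b⌋₊) := by
    ext i
    rw [Finset.mem_filter, Finset.mem_sdiff, hF, hF, Finset.mem_Ioc, Nat.le_floor_iff (ha.trans hab),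
      Nat.floor_lt ha, not_le]
    tauto
  rw [this, Finset.sum_filter]
  simp_rw [Finset.sum_filter, Finset.mul_sum]
  rw [Finset.sum_comm]
  apply Finset.sum_congr rfl
  intro i _
  simp_rw [mul_ite, mul_zero]
  rw [Finset.sum_ite_eq]
  simp [mul_comm]

section monoid
variable {P : Type*} (N : P → ℕ)

lemma Nm_zero : Nm N 0 = 1 := by simp [Nm]

lemma Nm_add (m n : P →₀ ℕ) : Nm N (m + n) = Nm N m * Nm N n := by
  unfold Nm
  exact Finsupp.prod_add_index' (by simp) (by intros; rw [pow_add])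

lemma Nm_single (p : P) (k : ℕ) : Nm N (Finsupp.single p k) = N p ^ k := by
  simp [Nm]

lemma Nm_pos (hN : ∀ p, 2 ≤ N p) (m : P →₀ ℕ) : 1 ≤ Nm N m := by
  unfold Nm Finsupp.prod
  apply Nat.one_le_iff_ne_zero.mpr
  apply Finset.prod_ne_zero_iff.mpr
  intro p _
  have := hN p
  positivity

/-- `h` times the indicator of `A`. -/
def chi (h : ℕ) (A : Finset P) : P →₀ ℕ := ∑ p ∈ A, Finsupp.single p h

lemma chi_apply (h : ℕ) (A : Finset P) (p : P) : chi h A p = if p ∈ A then h else 0 := by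
  simp [chi, Finsupp.finsetSum_apply, Finsupp.single_apply]

/-- norm of a finite set of primes -/
def NA (A : Finset P) : ℕ := ∏ p ∈ A, N p

lemma NA_pos (hN : ∀ p, 2 ≤ N p) (A : Finset P) : 1 ≤ NA N A := by
  unfold NA
  apply Nat.one_le_iff_ne_zero.mpr
  apply Finset.prod_ne_zero_iff.mpr
  intro p _
  have := hN p
  positivity

lemma Nm_chi (h : ℕ) (A : Finset P) : Nm N (chi h A) = NA N A ^ h := by
  induction A using Finset.induction_on with
  | empty => simp [chi, NA, Nm_zero]
  | insert a s ha ih =>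
    have : chi h (insert a s) = Finsupp.single a h + chi h s := by
      simp [chi, Finset.sum_insert ha]
    rw [this, Nm_add, ih, Nm_single, NA, NA, Finset.prod_insert ha, mul_pow]

lemma chi_inj : Function.Injective (chi (P := P) 1) := by
  intro A B hAB
  ext p
  have := DFunLike.congr_fun hAB p
  rw [chi_apply, chi_apply] at this
  by_cases h1 : p ∈ A <;> by_cases h2 : p ∈ B <;> simp_all

/-- the set of primes with multiplicity at least `h` -/
def bigset (h : ℕ) (n : P →₀ ℕ) : Finset P := n.support.filter (fun p => h ≤ n p)

lemma mem_bigset {h : ℕ} (hh : 1 ≤ h) (n : P →₀ ℕ) (p : P) : p ∈ bigset h n ↔ h ≤ n p := by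
  simp only [bigset, Finset.mem_filter, Finsupp.mem_support_iff]
  omega

/-- the reindexing used in the sieve -/
def sieveEquiv (h : ℕ) (hh : 1 ≤ h) :
    (Σ n : P →₀ ℕ, {A : Finset P // A ∈ (bigset h n).powerset}) ≃ Finset P × (P →₀ ℕ) where
  toFun z := (z.2.1, z.1 - chi h z.2.1)
  invFun z := ⟨z.2 + chi h z.1, ⟨z.1, by
    rw [Finset.mem_powerset]
    intro p hp
    rw [mem_bigset hh]
    simp [chi_apply, hp]⟩⟩
  left_inv := by
    rintro ⟨n, A, hA⟩
    rw [Finset.mem_powerset] at hA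
    have : n - chi h A + chi h A = n := by
      ext p
      simp only [Finsupp.coe_add, Finsupp.coe_tsub, Pi.add_apply, Pi.sub_apply, chi_apply]
      by_cases hp : p ∈ A
      · have := (mem_bigset hh n p).1 (hA hp)
        simp [hp]; omega
      · simp [hp]
    apply Sigma.ext
    · exact this
    · simp only
      congr! 1
      · simp only [this]
  right_inv := by
    rintro ⟨A, m⟩
    simp

lemma moebius (h : ℕ) (hh : 1 ≤ h) (f : (P →₀ ℕ) → ℝ)
    (hs : Summable fun z : Finset P × (P →₀ ℕ) => (-1 : ℝ) ^ z.1.card * f (z.2 + chi h z.1)) :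
    ∑' z : Finset P × (P →₀ ℕ), (-1 : ℝ) ^ z.1.card * f (z.2 + chi h z.1)
      = ∑' n, if HFree h n then f n else 0 := by
  rw [← (sieveEquiv h hh).tsum_eq]
  have hs2 := (sieveEquiv (P := P) h hh).summable_iff.2 hs
  have e : ∀ z, (fun z : Finset P × (P →₀ ℕ) => (-1 : ℝ) ^ z.1.card * f (z.2 + chi h z.1))
      (sieveEquiv h hh z) = (-1 : ℝ) ^ z.2.1.card * f z.1 := by
    intro z
    have := congrArg Sigma.fst ((sieveEquiv h hh).left_inv z)
    simp only [sieveEquiv] at this ⊢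
    simp only [Equiv.coe_fn_mk]
    rw [this]
  rw [show ((fun z : Finset P × (P →₀ ℕ) => (-1 : ℝ) ^ z.1.card * f (z.2 + chi h z.1)) ∘
    (sieveEquiv h hh)) = fun z => (-1 : ℝ) ^ z.2.1.card * f z.1 from funext e] at hs2
  rw [tsum_congr e, hs2.tsum_sigma]
  apply tsum_congr
  intro n
  simp only
  rw [tsum_mul_right,
    Finset.tsum_subtype (bigset h n).powerset (fun A : Finset P => (-1 : ℝ) ^ A.card)]
  have h1 := Finset.sum_powerset_neg_one_pow_card (x := bigset h n)
  have h2 : ∑ A ∈ (bigset h n).powerset, (-1 : ℝ) ^ A.card = if bigset h n = ∅ then 1 else 0 := by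
    have := congrArg (Int.cast : ℤ → ℝ) h1
    push_cast at this
    convert this using 2
  rw [h2]
  have h3 : bigset h n = ∅ ↔ HFree h n := by
    rw [Finset.eq_empty_iff_forall_notMem]
    unfold HFree
    apply forall_congr'
    intro p
    rw [mem_bigset hh]
    omega
  simp only [h3]
  split_ifs <;> simp

end monoid

/-- Canonical enumeration. -/
def FF {ι : Type*} (ν : ι → ℕ) (x : ℝ) : Finset ι :=
  if h : {i | (ν i : ℝ) ≤ x}.Finite then h.toFinset else ∅

lemma LFin_FF {ι : Type*} {ν : ι → ℕ} (h : ∀ x : ℝ, {i | (ν i : ℝ) ≤ x}.Finite) :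
    LFin ν (FF ν) := by
  intro x i
  simp [FF, h x]

lemma LFin.finite {ι : Type*} {ν : ι → ℕ} {F : ℝ → Finset ι} (h : LFin ν F) (x : ℝ) :
    {i | (ν i : ℝ) ≤ x}.Finite := by
  apply (F x).finite_toSet.subset
  intro i hi
  exact (h x i).2 hi

section monoid2
variable {P : Type*} {N : P → ℕ}

lemma LFin_of_inj (hM : LFin (Nm N) (FF (Nm N))) {ι : Type*} {ν : ι → ℕ}
    (j : ι → (P →₀ ℕ)) (hj : Function.Injective j) (hle : ∀ i, Nm N (j i) = ν i) :
    LFin ν (FF ν) := by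
  apply LFin_FF
  intro x
  apply Set.Finite.of_finite_image (f := j) _ hj.injOn
  apply (hM.finite x).subset
  rintro _ ⟨i, hi, rfl⟩
  simpa [hle] using hi

lemma card_le_of_inj (hM : LFin (Nm N) (FF (Nm N))) {ι : Type*} {ν : ι → ℕ}
    (j : ι → (P →₀ ℕ)) (hj : Function.Injective j) (hle : ∀ i, Nm N (j i) = ν i) (x : ℝ) :
    (FF ν x).card ≤ (FF (Nm N) x).card := by
  apply Finset.card_le_card_of_injOn j _ hj.injOn
  intro i hi
  have hi := (LFin_of_inj hM j hj hle x i).1 hi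
  apply (hM x _).2
  simpa [hle] using hi

lemma single_inj1 : Function.Injective (fun p : P => Finsupp.single p (1 : ℕ)) :=
  Finsupp.single_left_injective one_ne_zero

/-- norm of prime powers -/
def NQ (N : P → ℕ) (z : P × ℕ) : ℕ := N z.1 ^ (z.2 + 1)

lemma single_inj2 : Function.Injective (fun z : P × ℕ => Finsupp.single z.1 (z.2 + 1)) := by
  rintro ⟨p, k⟩ ⟨q, l⟩ h
  simp only at h
  rw [Finsupp.single_eq_single_iff] at h
  simp at h
  simp [h]

lemma LFin_P (hM : LFin (Nm N) (FF (Nm N))) : LFin N (FF N) :=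
  LFin_of_inj hM _ single_inj1 (by simp [Nm_single])

lemma LFin_Q (hM : LFin (Nm N) (FF (Nm N))) : LFin (NQ N) (FF (NQ N)) :=
  LFin_of_inj hM _ single_inj2 (by intro z; simp only [Nm_single, NQ])

lemma LFin_A (hM : LFin (Nm N) (FF (Nm N))) : LFin (NA N) (FF (NA N)) :=
  LFin_of_inj hM _ chi_inj (by simp [Nm_chi])

lemma sieve_fin (hN : ∀ p, 2 ≤ N p) (hM : LFin (Nm N) (FF (Nm N))) (h : ℕ) (hh : 1 ≤ h)
    (f : (P →₀ ℕ) → ℝ) (x : ℝ) :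
    ∑ A ∈ FF (NA N) x, (-1 : ℝ) ^ A.card *
        ∑ m ∈ FF (Nm N) (x / (NA N A : ℝ) ^ h), f (m + chi h A)
      = ∑ n ∈ (FF (Nm N) x).filter (HFree h), f n := by
  set g : (P →₀ ℕ) → ℝ := fun n => if (Nm N n : ℝ) ≤ x then f n else 0 with hg
  have hA := LFin_A hM
  have hnorm : ∀ (A : Finset P) (m : P →₀ ℕ), (Nm N (m + chi h A) : ℝ)
      = Nm N m * (NA N A : ℝ) ^ h := by
    intro A m; rw [Nm_add, Nm_chi]; push_cast; rfl
  have hsupp : ∀ z : Finset P × (P →₀ ℕ), z ∉ FF (NA N) x ×ˢ FF (Nm N) x →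
      (-1 : ℝ) ^ z.1.card * g (z.2 + chi h z.1) = 0 := by
    intro z hz
    have : ¬ ((Nm N (z.2 + chi h z.1) : ℝ) ≤ x) := by
      intro hle
      apply hz
      rw [Finset.mem_product, hA, hM]
      rw [hnorm] at hle
      have h1 : (1 : ℝ) ≤ Nm N z.2 := by exact_mod_cast Nm_pos N hN z.2
      have h2 : (1 : ℝ) ≤ NA N z.1 := by exact_mod_cast NA_pos N hN z.1
      have h3 : (NA N z.1 : ℝ) ≤ (NA N z.1 : ℝ) ^ h := le_self_pow₀ h2 (by omega)
      constructor <;> nlinarith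
    simp [hg, this]
  have hs : Summable fun z : Finset P × (P →₀ ℕ) =>
      (-1 : ℝ) ^ z.1.card * g (z.2 + chi h z.1) := summable_of_ne_finset_zero hsupp
  have key := moebius h hh g hs
  rw [tsum_eq_sum (s := FF (NA N) x ×ˢ FF (Nm N) x) (fun z hz => hsupp z hz),
    Finset.sum_product] at key
  rw [tsum_eq_sum (s := FF (Nm N) x)] at key
  · rw [Finset.sum_filter]
    convert key using 1
    · apply Finset.sum_congr rfl
      intro A hAx
      simp only
      rw [← Finset.mul_sum]
      congr 1
      simp only [hg]
      rw [← Finset.sum_filter]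
      apply Finset.sum_congr _ (fun _ _ => rfl)
      ext m
      rw [Finset.mem_filter, hM, hM, hnorm]
      have h2 : (1 : ℝ) ≤ NA N A := by exact_mod_cast NA_pos N hN A
      have h3 : (1 : ℝ) ≤ (NA N A : ℝ) ^ h := one_le_pow₀ h2
      have h1 : (1 : ℝ) ≤ Nm N m := by exact_mod_cast Nm_pos N hN m
      rw [le_div_iff₀ (by linarith)]
      constructor
      · intro hle; exact ⟨by nlinarith, hle⟩
      · exact fun h => h.2
    · apply Finset.sum_congr rfl
      intro n hn
      have := (hM x n).1 hn
      simp [hg, this]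
  · intro n hn
    rw [hM] at hn
    simp [hg, hn]

lemma HFree_one (n : P →₀ ℕ) : HFree 1 n ↔ n = 0 := by
  unfold HFree
  constructor
  · intro h; ext p; simpa using h p
  · rintro rfl; simp

lemma inversion (hN : ∀ p, 2 ≤ N p) (hM : LFin (Nm N) (FF (Nm N)))
    (g : ℝ → ℝ) (x : ℝ) (hx : 1 ≤ x) :
    ∑ A ∈ FF (NA N) x, (-1 : ℝ) ^ A.card *
        ∑ m ∈ FF (Nm N) (x / (NA N A : ℝ)), g (x / NA N A / Nm N m) = g x := by
  have := sieve_fin hN hM 1 le_rfl (fun n => g (x / Nm N n)) x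
  have e : (FF (Nm N) x).filter (HFree 1) = {0} := by
    ext n
    rw [Finset.mem_filter, hM, HFree_one, Finset.mem_singleton]
    constructor
    · exact fun h => h.2
    · rintro rfl
      rw [Nm_zero]
      simpa using hx
  rw [e] at this
  simp only [Finset.sum_singleton, Nm_zero, Nat.cast_one, div_one, pow_one, Nm_add, Nm_chi] at this
  rw [← this]
  apply Finset.sum_congr rfl
  intro A _
  congr 1
  apply Finset.sum_congr rfl
  intro m _
  congr 1
  push_cast
  rw [div_div, mul_comm]

lemma zeta_inv (s : ℝ)
    (hsM : Summable fun m : P →₀ ℕ => (Nm N m : ℝ) ^ (-s))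
    (hsA : Summable fun A : Finset P => (NA N A : ℝ) ^ (-s)) :
    (∑' A : Finset P, (-1 : ℝ) ^ A.card * (NA N A : ℝ) ^ (-s)) *
      (∑' m : P →₀ ℕ, (Nm N m : ℝ) ^ (-s)) = 1 := by
  have hsA' : Summable fun A : Finset P => (-1 : ℝ) ^ A.card * (NA N A : ℝ) ^ (-s) := by
    apply Summable.of_norm
    simpa [abs_mul, abs_pow, abs_of_nonneg (Real.rpow_nonneg (Nat.cast_nonneg _) _)] using hsA
  have hnorm : ∀ z : Finset P × (P →₀ ℕ),
      (-1 : ℝ) ^ z.1.card * (Nm N (z.2 + chi 1 z.1) : ℝ) ^ (-s)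
      = ((-1 : ℝ) ^ z.1.card * (NA N z.1 : ℝ) ^ (-s)) * (Nm N z.2 : ℝ) ^ (-s) := by
    intro z
    rw [Nm_add, Nm_chi]; push_cast
    rw [pow_one, Real.mul_rpow (by positivity) (by positivity)]
    ring
  have hs : Summable fun z : Finset P × (P →₀ ℕ) =>
      ((-1 : ℝ) ^ z.1.card * (NA N z.1 : ℝ) ^ (-s)) * (Nm N z.2 : ℝ) ^ (-s) := by
    exact summable_mul_of_summable_norm hsA'.norm hsM.norm
  have key := moebius 1 le_rfl (fun n => (Nm N n : ℝ) ^ (-s)) (by simpa only [hnorm] using hs)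
  rw [hsA'.tsum_mul_tsum hsM hs, ← tsum_congr hnorm, key, tsum_eq_single 0]
  · simp [HFree_one, Nm_zero]
  · intro n hn
    simp [HFree_one, hn]

end monoid2

section analytic
variable {P : Type*} {N : P → ℕ}

lemma star_fin {κ θ : ℝ} (hstar : StarCond N κ θ) : LFin (Nm N) (FF (Nm N)) := by
  apply LFin_FF
  by_contra hcon
  push Not at hcon
  obtain ⟨x0, hx0⟩ := hcon
  obtain ⟨hκ, hθ0, hθ1, hO⟩ := hstar
  obtain ⟨C, hC⟩ := hO.bound
  have ht : Tendsto (fun x : ℝ => x ^ (1 - θ)) atTop atTop := tendsto_rpow_atTop (by linarith)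
  have hev := (hC.and (eventually_ge_atTop (max x0 1))).and (ht.eventually_gt_atTop (C / κ))
  obtain ⟨x, ⟨h1, h2⟩, h3⟩ := hev.exists
  have hx1 : 1 ≤ x := (le_max_right _ _).trans h2
  have hinf : {m : P →₀ ℕ | (Nm N m : ℝ) ≤ x}.Infinite := by
    apply Set.Infinite.mono _ hx0
    intro m hm
    exact le_trans hm ((le_max_left _ _).trans h2)
  rw [hinf.ncard] at h1
  have hxp : 0 < x := by linarith
  have hp : 0 < x ^ θ := by positivity
  simp only [Nat.cast_zero, zero_sub, norm_neg, Real.norm_eq_abs, abs_of_pos (mul_pos hκ hxp),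
    abs_of_pos hp] at h1
  rw [Real.rpow_sub hxp, Real.rpow_one, div_lt_div_iff₀ hκ hp] at h3
  linarith

lemma card_eq_ncard (hM : LFin (Nm N) (FF (Nm N))) (x : ℝ) :
    {m : P →₀ ℕ | (Nm N m : ℝ) ≤ x}.ncard = (FF (Nm N) x).card := by
  rw [← Set.ncard_coe_finset]
  congr 1
  ext m
  simp [hM x m]

lemma star_bound (hN : ∀ p, 2 ≤ N p) {κ θ : ℝ} (hstar : StarCond N κ θ) (τ : ℝ)
    (hτ : θ ≤ τ) (hτ1 : τ ≤ 1) :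
    ∃ C : ℝ, 0 ≤ C ∧ ∀ y : ℝ, 0 < y → |((FF (Nm N) y).card : ℝ) - κ * y| ≤ C * y ^ τ := by
  have hM := star_fin hstar
  obtain ⟨hκ, hθ0, hθ1, hO⟩ := hstar
  obtain ⟨C, hC⟩ := hO.bound
  obtain ⟨x0, hx0⟩ := eventually_atTop.1 hC
  set x1 := max x0 1 with hx1
  have h11 : 1 ≤ x1 := le_max_right _ _
  set D : ℝ := (FF (Nm N) x1).card + κ * x1 with hD
  have hD0 : 0 ≤ D := by positivity
  have hκD : κ ≤ D := by
    have : (0 : ℝ) ≤ (FF (Nm N) x1).card := by positivity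
    nlinarith
  refine ⟨|C| + D, by positivity, ?_⟩
  intro y hy
  have hyτ : 0 < y ^ τ := by positivity
  rcases lt_or_ge y 1 with hlt | hge
  · rw [hM.empty (Nm_pos N hN) hlt]
    simp only [Finset.card_empty, Nat.cast_zero, zero_sub, abs_neg, abs_of_pos (mul_pos hκ hy)]
    have : y ≤ y ^ τ := by
      calc y = y ^ (1 : ℝ) := by simp
        _ ≤ y ^ τ := Real.rpow_le_rpow_of_exponent_ge hy hlt.le hτ1
    have := abs_nonneg C
    nlinarith
  · have h1 : (1 : ℝ) ≤ y ^ τ := Real.one_le_rpow hge (by linarith)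
    rcases lt_or_ge y x1 with hl | hg
    · have hcard : ((FF (Nm N) y).card : ℝ) ≤ (FF (Nm N) x1).card := by
        exact_mod_cast Finset.card_le_card (hM.mono hl.le)
      have h0 : (0 : ℝ) ≤ (FF (Nm N) y).card := by positivity
      have : |((FF (Nm N) y).card : ℝ) - κ * y| ≤ D := by
        rw [abs_le]
        constructor <;> nlinarith
      have := abs_nonneg C
      nlinarith
    · have := hx0 y ((le_max_left _ _).trans hg)
      rw [card_eq_ncard hM, Real.norm_eq_abs, Real.norm_eq_abs,
        abs_of_pos (show 0 < y ^ θ by positivity)] at this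
      have h2 : y ^ θ ≤ y ^ τ := Real.rpow_le_rpow_of_exponent_le hge hτ
      have h3 := le_abs_self C
      have h4 := abs_nonneg C
      calc _ ≤ C * y ^ θ := this
        _ ≤ |C| * y ^ θ := by gcongr
        _ ≤ |C| * y ^ τ := by gcongr
        _ ≤ _ := by nlinarith

lemma meas_card (hM : LFin (Nm N) (FF (Nm N))) :
    Measurable (fun t : ℝ => ((FF (Nm N) t).card : ℝ)) := by
  apply Monotone.measurable
  intro a b hab
  simp only
  exact_mod_cast Finset.card_le_card (hM.mono hab)

variable (hN : ∀ p, 2 ≤ N p) (hM : LFin (Nm N) (FF (Nm N))) {κ τ C : ℝ} (hκ : 0 < κ)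
  (hτ0 : 0 < τ) (hτ1 : τ < 1) (hC : 0 ≤ C)
  (hI : ∀ y : ℝ, 0 < y → |((FF (Nm N) y).card : ℝ) - κ * y| ≤ C * y ^ τ)

include hτ1 hC hI in
lemma card_le_lin (x : ℝ) (hx : 1 ≤ x) : ((FF (Nm N) x).card : ℝ) ≤ (κ + C) * x := by
  have h1 := (abs_le.1 (hI x (by linarith))).2
  have h2 : x ^ τ ≤ x := by
    calc x ^ τ ≤ x ^ (1 : ℝ) := Real.rpow_le_rpow_of_exponent_le hx hτ1.le
      _ = x := by simp
  nlinarith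

include hM hτ0 hC hI in
lemma int_log (x : ℝ) (hx : 1 ≤ x) :
    |(∫ t in Set.Ioc (1 / 2) x, t⁻¹ * ((FF (Nm N) t).card : ℝ)) - κ * (x - 1 / 2)|
      ≤ C / τ * x ^ τ := by
  set E : ℝ → ℝ := fun t => t⁻¹ * (((FF (Nm N) t).card : ℝ) - κ * t) with hE
  have hbi : MeasureTheory.IntegrableOn (fun t : ℝ => C * t ^ (τ - 1)) (Set.Ioc (1 / 2) x) := by
    apply MeasureTheory.IntegrableOn.mono_set _ Set.Ioc_subset_Icc_self
    apply ContinuousOn.integrableOn_Icc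
    apply ContinuousOn.mul continuousOn_const
    apply ContinuousOn.rpow_const continuousOn_id
    intro t ht
    left
    have := ht.1
    simp only [id]; linarith
  have hEb : ∀ t ∈ Set.Ioc (1 / 2) x, ‖E t‖ ≤ C * t ^ (τ - 1) := by
    intro t ht
    have ht0 : 0 < t := by have := ht.1; linarith
    rw [hE]
    simp only [norm_mul, Real.norm_eq_abs, abs_inv, abs_of_pos ht0]
    rw [Real.rpow_sub ht0, Real.rpow_one]
    have := hI t ht0
    calc t⁻¹ * |((FF (Nm N) t).card : ℝ) - κ * t| ≤ t⁻¹ * (C * t ^ τ) := by gcongr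
      _ = _ := by field_simp
  have hEm : Measurable E := by
    have := meas_card hM
    fun_prop
  have hEae : ∀ᵐ t ∂(MeasureTheory.volume.restrict (Set.Ioc (1 / 2) x)), ‖E t‖ ≤ C * t ^ (τ - 1) :=
    (MeasureTheory.ae_restrict_iff' measurableSet_Ioc).2 (Eventually.of_forall hEb)
  have hEi : MeasureTheory.IntegrableOn E (Set.Ioc (1 / 2) x) :=
    MeasureTheory.Integrable.mono' hbi hEm.aestronglyMeasurable hEae
  have e1 : (∫ t in Set.Ioc (1 / 2) x, t⁻¹ * ((FF (Nm N) t).card : ℝ))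
      = (∫ t in Set.Ioc (1 / 2) x, E t) + κ * (x - 1 / 2) := by
    have : ∫ t in Set.Ioc (1 / 2) x, t⁻¹ * ((FF (Nm N) t).card : ℝ)
        = ∫ t in Set.Ioc (1 / 2) x, (E t + κ) := by
      apply MeasureTheory.setIntegral_congr_fun measurableSet_Ioc
      intro t ht
      have ht0 : 0 < t := by have := ht.1; linarith
      simp only [hE]
      field_simp
      ring
    rw [this, MeasureTheory.integral_add hEi (by simp)]
    congr 1
    simp [max_eq_left (show (0 : ℝ) ≤ x - 2⁻¹ by norm_num; linarith)]
    ring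
  rw [e1, add_sub_cancel_right]
  have h1 := MeasureTheory.norm_integral_le_of_norm_le hbi hEae
  rw [Real.norm_eq_abs] at h1
  refine h1.trans ?_
  rw [← intervalIntegral.integral_of_le (by linarith), intervalIntegral.integral_const_mul,
    integral_rpow (Or.inl (by linarith)), sub_add_cancel]
  have : (0 : ℝ) < (1 / 2) ^ τ := by positivity
  rw [div_mul_eq_mul_div, mul_div_assoc]
  gcongr
  linarith

include hM hτ1 hI in
lemma int_inv : ∃ c : ℝ, ∀ x : ℝ, 1 ≤ x →
    |(∫ t in Set.Ioc (1 / 2) x, (t ^ 2)⁻¹ * ((FF (Nm N) t).card : ℝ)) - κ * Real.log x - c|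
      ≤ C / (1 - τ) * x ^ (τ - 1) := by
  set E : ℝ → ℝ := fun t => (t ^ 2)⁻¹ * (((FF (Nm N) t).card : ℝ) - κ * t) with hE
  have hbi : ∀ a : ℝ, 0 < a →
      MeasureTheory.IntegrableOn (fun t : ℝ => C * t ^ (τ - 2)) (Set.Ioi a) := by
    intro a ha
    exact (integrableOn_Ioi_rpow_of_lt (by linarith) ha).const_mul C
  have hEb : ∀ t : ℝ, 0 < t → ‖E t‖ ≤ C * t ^ (τ - 2) := by
    intro t ht0
    rw [hE]
    simp only [norm_mul, Real.norm_eq_abs, abs_inv, abs_of_pos (pow_pos ht0 2)]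
    have h2 : t ^ (τ - 2) = t ^ τ / t ^ 2 := by
      rw [Real.rpow_sub ht0]; norm_num
    rw [h2]
    have := hI t ht0
    calc (t ^ 2)⁻¹ * |((FF (Nm N) t).card : ℝ) - κ * t| ≤ (t ^ 2)⁻¹ * (C * t ^ τ) := by gcongr
      _ = _ := by field_simp
  have hEm : Measurable E := by
    have := meas_card hM
    fun_prop
  have hEae : ∀ a : ℝ, 0 < a → ∀ᵐ t ∂(MeasureTheory.volume.restrict (Set.Ioi a)),
      ‖E t‖ ≤ C * t ^ (τ - 2) := fun a ha =>
    (MeasureTheory.ae_restrict_iff' measurableSet_Ioi).2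
      (Eventually.of_forall fun t ht => hEb t (ha.trans ht))
  have hEi : ∀ a : ℝ, 0 < a → MeasureTheory.IntegrableOn E (Set.Ioi a) := fun a ha =>
    MeasureTheory.Integrable.mono' (hbi a ha) hEm.aestronglyMeasurable (hEae a ha)
  refine ⟨(∫ t in Set.Ioi (1 / 2), E t) - κ * Real.log (1 / 2), ?_⟩
  intro x hx
  have hx0 : 0 < x := by linarith
  have hinv : MeasureTheory.IntegrableOn (fun t : ℝ => κ * t⁻¹) (Set.Ioc (1 / 2) x) := by
    apply MeasureTheory.IntegrableOn.mono_set _ Set.Ioc_subset_Icc_self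
    apply ContinuousOn.integrableOn_Icc
    apply ContinuousOn.mul continuousOn_const
    apply ContinuousOn.inv₀ continuousOn_id
    intro t ht
    have := ht.1
    simp only [id]; linarith
  have hEi2 : MeasureTheory.IntegrableOn E (Set.Ioc (1 / 2) x) :=
    (hEi (1 / 2) (by norm_num)).mono_set Set.Ioc_subset_Ioi_self
  have e1 : (∫ t in Set.Ioc (1 / 2) x, (t ^ 2)⁻¹ * ((FF (Nm N) t).card : ℝ))
      = (∫ t in Set.Ioc (1 / 2) x, E t) + κ * (Real.log x - Real.log (1 / 2)) := by
    have : ∫ t in Set.Ioc (1 / 2) x, (t ^ 2)⁻¹ * ((FF (Nm N) t).card : ℝ)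
        = ∫ t in Set.Ioc (1 / 2) x, (E t + κ * t⁻¹) := by
      apply MeasureTheory.setIntegral_congr_fun measurableSet_Ioc
      intro t ht
      have ht0 : 0 < t := by have := ht.1; linarith
      simp only [hE]
      field_simp
      ring
    rw [this, MeasureTheory.integral_add hEi2 hinv]
    congr 1
    rw [← intervalIntegral.integral_of_le (by linarith), intervalIntegral.integral_const_mul,
      integral_inv_of_pos (by norm_num) hx0, Real.log_div hx0.ne' (by norm_num)]
  have e2 : ∫ t in Set.Ioi (1 / 2), E t = (∫ t in Set.Ioc (1 / 2) x, E t) + ∫ t in Set.Ioi x, E t := by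
    rw [← MeasureTheory.setIntegral_union _ measurableSet_Ioi hEi2 (hEi x hx0),
      Set.Ioc_union_Ioi_eq_Ioi (by linarith)]
    exact Set.Ioc_disjoint_Ioi le_rfl
  rw [e1, e2]
  have h1 := MeasureTheory.norm_integral_le_of_norm_le (hbi x hx0) (hEae x hx0)
  rw [MeasureTheory.integral_const_mul, integral_Ioi_rpow_of_lt (by linarith) hx0] at h1
  rw [Real.norm_eq_abs] at h1
  have e3 : ∀ a b c d : ℝ, a + κ * (c - d) - κ * c - (a + b - κ * d) = -b := by intros; ring
  rw [e3, abs_neg]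
  refine h1.trans (le_of_eq ?_)
  rw [show τ - 2 + 1 = -(1 - τ) by ring, show -(1 - τ) = τ - 1 by ring]
  have : (1 - τ) ≠ 0 := by linarith
  have : (τ - 1) ≠ 0 := by linarith
  field_simp
  ring

include hN hM hC hI hτ0 hτ1 in
lemma L_asymp (σ : ℝ) (hσ : τ < σ) : ∃ K : ℝ, 0 ≤ K ∧ ∀ x : ℝ, 1 ≤ x →
    |∑ m ∈ FF (Nm N) x, Real.log (Nm N m) - (κ * x * Real.log x - κ * x)| ≤ K * x ^ σ := by
  refine ⟨C / (σ - τ) + C / τ + |κ|, ?_, ?_⟩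
  · have : 0 < σ - τ := by linarith
    positivity
  intro x hx
  have hx0 : 0 < x := by linarith
  have hab := abel_sum hM (fun _ => (1 : ℝ)) (a := 1 / 2) (b := x) (by norm_num) (by linarith)
    Real.log (fun t ht => Real.differentiableAt_log (by have := ht.1; linarith)) (by
      apply ContinuousOn.integrableOn_Icc
      rw [Real.deriv_log']
      apply ContinuousOn.inv₀ continuousOn_id
      intro t ht
      have := ht.1
      simp only [id]; linarith)
  rw [hM.empty (Nm_pos N hN) (show (1 / 2 : ℝ) < 1 by norm_num)] at hab
  simp only [one_mul, Finset.card_empty, Nat.cast_zero, Finset.sum_empty, sub_zero, mul_zero, Finset.sum_const, nsmul_eq_mul,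
    mul_one, Real.deriv_log'] at hab
  rw [hab]
  have h1 := hI x hx0
  have h2 := int_log hM hτ0 hC hI x hx
  have hlog : Real.log x ≤ x ^ (σ - τ) / (σ - τ) := Real.log_le_rpow_div hx0.le (by linarith)
  have hlog0 : 0 ≤ Real.log x := Real.log_nonneg hx
  have h3 : |Real.log x * ((FF (Nm N) x).card - κ * x)| ≤ C / (σ - τ) * x ^ σ := by
    rw [abs_mul, abs_of_nonneg hlog0]
    calc Real.log x * |((FF (Nm N) x).card : ℝ) - κ * x|
        ≤ (x ^ (σ - τ) / (σ - τ)) * (C * x ^ τ) := by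
          apply mul_le_mul hlog h1 (abs_nonneg _)
          have : 0 < σ - τ := by linarith
          positivity
      _ = C / (σ - τ) * (x ^ (σ - τ) * x ^ τ) := by ring
      _ = _ := by rw [← Real.rpow_add hx0, sub_add_cancel]
  have h4 : C / τ * x ^ τ ≤ C / τ * x ^ σ := by
    gcongr
  have h5 : (1 : ℝ) ≤ x ^ σ := Real.one_le_rpow hx (by linarith)
  have h6 : |κ * (1 / 2)| ≤ |κ| * x ^ σ := by
    rw [abs_mul]
    gcongr
    rw [abs_of_pos (by norm_num)]; linarith
  set J := ∫ t in Set.Ioc (1 / 2) x, t⁻¹ * ((FF (Nm N) t).card : ℝ) with hJ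
  have e : Real.log x * ((FF (Nm N) x).card : ℝ) - J - (κ * x * Real.log x - κ * x)
      = Real.log x * (((FF (Nm N) x).card : ℝ) - κ * x) - (J - κ * (x - 1 / 2)) + κ * (1 / 2) := by
    ring
  rw [e]
  refine (abs_add_le _ _).trans ?_
  have := abs_sub (Real.log x * (((FF (Nm N) x).card : ℝ) - κ * x)) (J - κ * (x - 1 / 2))
  rw [add_mul, add_mul]
  linarith

include hN hM hC hI hτ1 in
lemma R_asymp : ∃ c K : ℝ, 0 ≤ K ∧ ∀ x : ℝ, 1 ≤ x →
    |x * ∑ m ∈ FF (Nm N) x, (Nm N m : ℝ)⁻¹ - (κ * x * Real.log x + c * x)| ≤ K * x ^ τ := by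
  obtain ⟨c, hc⟩ := int_inv hM hτ1 hI
  have h1τ : 0 < 1 - τ := by linarith
  refine ⟨c + κ, C + C / (1 - τ), by positivity, ?_⟩
  intro x hx
  have hx0 : 0 < x := by linarith
  have hab := abel_sum hM (fun _ => (1 : ℝ)) (a := 1 / 2) (b := x) (by norm_num) (by linarith)
    (fun t => t⁻¹) (fun t ht => differentiableAt_inv (by have := ht.1; linarith)) (by
      apply ContinuousOn.integrableOn_Icc
      rw [deriv_inv']
      apply ContinuousOn.neg
      apply ContinuousOn.inv₀ (by fun_prop)
      intro t ht
      have := ht.1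
      positivity)
  rw [hM.empty (Nm_pos N hN) (show (1 / 2 : ℝ) < 1 by norm_num)] at hab
  simp only [one_mul, Finset.card_empty, Nat.cast_zero, Finset.sum_empty, sub_zero, mul_zero, Finset.sum_const, nsmul_eq_mul,
    mul_one, deriv_inv', neg_mul] at hab
  rw [MeasureTheory.integral_neg, sub_neg_eq_add] at hab
  rw [hab]
  have h2 := hc x hx
  have h1 := hI x hx0
  set J := ∫ t in Set.Ioc (1 / 2) x, (t ^ 2)⁻¹ * ((FF (Nm N) t).card : ℝ) with hJ
  have e : x * (x⁻¹ * ((FF (Nm N) x).card : ℝ) + J) - (κ * x * Real.log x + (c + κ) * x)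
      = (((FF (Nm N) x).card : ℝ) - κ * x) + x * (J - κ * Real.log x - c) := by
    field_simp
    ring
  rw [e]
  refine (abs_add_le _ _).trans ?_
  rw [abs_mul, abs_of_pos hx0, add_mul]
  have h3 : x * |J - κ * Real.log x - c| ≤ x * (C / (1 - τ) * x ^ (τ - 1)) := by gcongr
  have h4 : x * (C / (1 - τ) * x ^ (τ - 1)) = C / (1 - τ) * x ^ τ := by
    rw [Real.rpow_sub hx0, Real.rpow_one]; field_simp
  linarith

end analytic

section chebyshev
variable {P : Type*} {N : P → ℕ}

lemma log_Nm (hN : ∀ p, 2 ≤ N p) (m : P →₀ ℕ) :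
    Real.log (Nm N m) = ∑ p ∈ m.support, (m p : ℝ) * Real.log (N p) := by
  unfold Nm Finsupp.prod
  push_cast
  rw [Real.log_prod]
  · apply Finset.sum_congr rfl
    intro p _
    rw [Real.log_pow]
  · intro p _
    have := hN p
    positivity

lemma add_single_card (hN : ∀ p, 2 ≤ N p) (hM : LFin (Nm N) (FF (Nm N))) (x : ℝ) (z : P × ℕ) :
    ((FF (Nm N) x).filter (fun n => z.2 + 1 ≤ n z.1)).card
      = (FF (Nm N) (x / NQ N z)).card := by
  symm
  have hpos : (0 : ℝ) < NQ N z := by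
    have := hN z.1
    unfold NQ; positivity
  apply Finset.card_bij (fun m _ => m + Finsupp.single z.1 (z.2 + 1))
  · intro m hm
    rw [hM, le_div_iff₀ hpos] at hm
    rw [Finset.mem_filter, hM, Nm_add, Nm_single]
    refine ⟨?_, by simp⟩
    unfold NQ at hm
    push_cast at hm ⊢
    exact hm
  · intro a _ b _ hab
    simpa using hab
  · intro n hn
    rw [Finset.mem_filter, hM] at hn
    have hle : Finsupp.single z.1 (z.2 + 1) ≤ n := by
      rw [Finsupp.single_le_iff]; exact hn.2
    refine ⟨n - Finsupp.single z.1 (z.2 + 1), ?_, tsub_add_cancel_of_le hle⟩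
    rw [hM, le_div_iff₀ hpos]
    have := hn.1
    rw [← tsub_add_cancel_of_le hle, Nm_add, Nm_single] at this
    unfold NQ
    push_cast at this ⊢
    exact this

lemma L_conv1 (hN : ∀ p, 2 ≤ N p) (hM : LFin (Nm N) (FF (Nm N))) (x : ℝ) :
    ∑ m ∈ FF (Nm N) x, Real.log (Nm N m)
      = ∑ z ∈ FF (NQ N) x, Real.log (N z.1) * ((FF (Nm N) (x / NQ N z)).card : ℝ) := by
  have hQ := LFin_Q hM
  have h1 : ∀ n ∈ FF (Nm N) x, Real.log (Nm N n)
      = ∑ z ∈ FF (NQ N) x, if z.2 + 1 ≤ n z.1 then Real.log (N z.1) else 0 := by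
    intro n hn
    rw [hM] at hn
    rw [log_Nm hN, ← Finset.sum_filter, Finset.sum_finset_product
      (s := n.support) (t := fun p => Finset.range (n p))]
    · apply Finset.sum_congr rfl
      intro p _
      simp
    · rintro ⟨p, k⟩
      rw [Finset.mem_filter, hQ, Finsupp.mem_support_iff, Finset.mem_range]
      simp only
      constructor
      · intro h; omega
      · intro h
        refine ⟨?_, h.2⟩
        refine le_trans ?_ hn
        have hle : Finsupp.single p (k + 1) ≤ n := by
          rw [Finsupp.single_le_iff]; exact h.2
        rw [← tsub_add_cancel_of_le hle, Nm_add, Nm_single]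
        unfold NQ
        exact_mod_cast Nat.le_mul_of_pos_left _ (Nm_pos N hN _)
  rw [Finset.sum_congr rfl h1, Finset.sum_comm]
  apply Finset.sum_congr rfl
  intro z _
  rw [← Finset.sum_filter, Finset.sum_const, add_single_card hN hM, nsmul_eq_mul, mul_comm]

/-- Chebyshev psi function -/
def psi (N : P → ℕ) (x : ℝ) : ℝ := ∑ z ∈ FF (NQ N) x, Real.log (N z.1)

lemma NQ_pos (hN : ∀ p, 2 ≤ N p) (z : P × ℕ) : 1 ≤ NQ N z := by
  have := hN z.1
  unfold NQ
  exact Nat.one_le_pow _ _ (by omega)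

lemma L_conv2 (hN : ∀ p, 2 ≤ N p) (hM : LFin (Nm N) (FF (Nm N))) (x : ℝ) :
    ∑ m ∈ FF (Nm N) x, Real.log (Nm N m) = ∑ m ∈ FF (Nm N) x, psi N (x / Nm N m) := by
  have hQ := LFin_Q hM
  rw [L_conv1 hN hM]
  have e1 : ∀ z ∈ FF (NQ N) x, Real.log (N z.1) * ((FF (Nm N) (x / NQ N z)).card : ℝ)
      = ∑ m ∈ FF (Nm N) x, if (Nm N m : ℝ) * NQ N z ≤ x then Real.log (N z.1) else 0 := by
    intro z _
    rw [← Finset.sum_filter, Finset.sum_const, nsmul_eq_mul, mul_comm]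
    congr 3
    ext m
    have h1 : (1 : ℝ) ≤ NQ N z := by exact_mod_cast NQ_pos hN z
    have h2 : (1 : ℝ) ≤ Nm N m := by exact_mod_cast Nm_pos N hN m
    rw [Finset.mem_filter, hM, hM, le_div_iff₀ (by linarith)]
    constructor
    · intro h; exact ⟨by nlinarith, h⟩
    · exact fun h => h.2
  rw [Finset.sum_congr rfl e1, Finset.sum_comm]
  apply Finset.sum_congr rfl
  intro m _
  rw [← Finset.sum_filter]
  unfold psi
  apply Finset.sum_congr _ (fun _ _ => rfl)
  ext z
  have h1 : (1 : ℝ) ≤ NQ N z := by exact_mod_cast NQ_pos hN z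
  have h2 : (1 : ℝ) ≤ Nm N m := by exact_mod_cast Nm_pos N hN m
  rw [Finset.mem_filter, hQ, hQ, le_div_iff₀ (by linarith), mul_comm]
  constructor
  · exact fun h => h.2
  · intro h; exact ⟨by nlinarith, h⟩

lemma logN_nonneg (p : P) : 0 ≤ Real.log (N p) := Real.log_natCast_nonneg _

variable (hN : ∀ p, 2 ≤ N p) (hM : LFin (Nm N) (FF (Nm N))) {κ τ C : ℝ} (hκ : 0 < κ)
  (hτ0 : 0 < τ) (hτ1 : τ < 1) (hC : 0 ≤ C)
  (hI : ∀ y : ℝ, 0 < y → |((FF (Nm N) y).card : ℝ) - κ * y| ≤ C * y ^ τ)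

include hN hM hκ hτ0 hτ1 hC hI in
lemma chebyshev_psi : ∃ B : ℝ, 0 ≤ B ∧ ∀ x : ℝ, 1 ≤ x → psi N x ≤ B * x := by
  set σ := (1 + τ) / 2 with hσ
  have hσ1 : τ < σ := by linarith
  have hσ2 : σ < 1 := by linarith
  obtain ⟨K1, hK10, hK1⟩ := L_asymp hN hM hτ0 hτ1 hC hI σ hσ1
  obtain ⟨c, K2, hK20, hK2⟩ := R_asymp hN hM hτ1 hC hI
  set b : ℝ := -(κ + c) / κ with hb
  have hbκ : b * κ = -(κ + c) := by rw [hb]; field_simp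
  set K := K1 + K2 + |b| * C with hK
  have hK0 : 0 ≤ K := by positivity
  have hA := LFin_A hM
  obtain ⟨K3, hK30, hK3⟩ := lemW hA (NA_pos N hN) (fun _ => (1 : ℝ)) (fun _ => zero_le_one)
    (κ + C) (by positivity) (by
      intro x hx
      have h1 := card_le_of_inj hM _ chi_inj (ν := NA N) (by simp [Nm_chi]) x
      have h2 := card_le_lin hτ1 hC hI x hx
      have h3 : ((FF (NA N) x).card : ℝ) ≤ (FF (Nm N) x).card := by exact_mod_cast h1
      simp only [Finset.sum_const, nsmul_eq_mul, mul_one]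
      linarith) σ (by linarith) hσ2
  set g : ℝ → ℝ := fun y => psi N y - y - b with hg
  have hG : ∀ y : ℝ, 1 ≤ y → |∑ m ∈ FF (Nm N) y, g (y / Nm N m)| ≤ K * y ^ σ := by
    intro y hy
    have hy0 : 0 < y := by linarith
    have e : ∑ m ∈ FF (Nm N) y, g (y / Nm N m)
        = (∑ m ∈ FF (Nm N) y, Real.log (Nm N m) - (κ * y * Real.log y - κ * y))
          - (y * ∑ m ∈ FF (Nm N) y, (Nm N m : ℝ)⁻¹ - (κ * y * Real.log y + c * y))
          - b * (((FF (Nm N) y).card : ℝ) - κ * y) := by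
      simp only [hg, Finset.sum_sub_distrib, Finset.sum_const, nsmul_eq_mul]
      rw [L_conv2 hN hM, Finset.mul_sum]
      simp only [div_eq_mul_inv]
      linear_combination (-y) * hbκ
    have hpow : y ^ τ ≤ y ^ σ := Real.rpow_le_rpow_of_exponent_le hy hσ1.le
    have h1 := hK1 y hy
    have h2 := (hK2 y hy).trans (mul_le_mul_of_nonneg_left hpow hK20)
    have h3 : |b * (((FF (Nm N) y).card : ℝ) - κ * y)| ≤ |b| * C * y ^ σ := by
      rw [abs_mul, mul_assoc]
      exact mul_le_mul_of_nonneg_left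
        ((hI y hy0).trans (mul_le_mul_of_nonneg_left hpow hC)) (abs_nonneg b)
    rw [e]
    refine (abs_sub _ _).trans ?_
    refine (add_le_add_left (abs_sub _ _) _).trans ?_
    rw [hK, add_mul, add_mul]
    linarith
  refine ⟨1 + |b| + K * K3, by positivity, ?_⟩
  intro x hx
  have hx0 : 0 < x := by linarith
  have hinv := inversion hN hM g x hx
  have hbound : |g x| ≤ K * (K3 * x) := by
    rw [← hinv]
    refine (Finset.abs_sum_le_sum_abs _ _).trans ?_
    calc ∑ A ∈ FF (NA N) x, |(-1 : ℝ) ^ A.card *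
            ∑ m ∈ FF (Nm N) (x / (NA N A : ℝ)), g (x / NA N A / Nm N m)|
        ≤ ∑ A ∈ FF (NA N) x, K * (1 * (x / NA N A) ^ σ) := by
          apply Finset.sum_le_sum
          intro A hAx
          rw [hA] at hAx
          have h1 : (1 : ℝ) ≤ NA N A := by exact_mod_cast NA_pos N hN A
          rw [abs_mul, abs_pow, abs_neg, abs_one, one_pow, one_mul, one_mul]
          apply hG
          rw [le_div_iff₀ (by linarith)]
          linarith
      _ = K * ∑ A ∈ FF (NA N) x, (1 * (x / NA N A) ^ σ) := by rw [Finset.mul_sum]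
      _ ≤ K * (K3 * x) := mul_le_mul_of_nonneg_left (hK3 x hx0) hK0
  have h1 := (abs_le.1 hbound).2
  simp only [hg] at h1
  have h2 := le_abs_self b
  have h3 : |b| ≤ |b| * x := le_mul_of_one_le_right (abs_nonneg b) hx
  nlinarith

include hN hM hκ hτ0 hτ1 hC hI in
lemma mertens_one_psi : ∃ B : ℝ, ∀ x : ℝ, 1 ≤ x →
    |∑ z ∈ FF (NQ N) x, Real.log (N z.1) / NQ N z - Real.log x| ≤ B := by
  obtain ⟨B, hB0, hB⟩ := chebyshev_psi hN hM hκ hτ0 hτ1 hC hI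
  have hQ := LFin_Q hM
  obtain ⟨K3, hK30, hK3⟩ := lemW hQ (NQ_pos hN) (fun z => Real.log (N z.1))
    (fun z => logN_nonneg z.1) B hB0 hB τ hτ0.le hτ1
  set σ := (1 + τ) / 2 with hσ
  have hσ1 : τ < σ := by linarith
  have hσ2 : σ < 1 := by linarith
  obtain ⟨K1, hK10, hK1⟩ := L_asymp hN hM hτ0 hτ1 hC hI σ hσ1
  refine ⟨(K1 + κ + C * K3) / κ, ?_⟩
  intro x hx
  have hx0 : 0 < x := by linarith
  have h1 := hK1 x hx
  have hpow : x ^ σ ≤ x := by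
    calc x ^ σ ≤ x ^ (1 : ℝ) := Real.rpow_le_rpow_of_exponent_le hx hσ2.le
      _ = x := by simp
  rw [L_conv1 hN hM] at h1
  have e : ∑ z ∈ FF (NQ N) x, Real.log (N z.1) * ((FF (Nm N) (x / NQ N z)).card : ℝ)
      = κ * x * ∑ z ∈ FF (NQ N) x, Real.log (N z.1) / NQ N z
        + ∑ z ∈ FF (NQ N) x, Real.log (N z.1) *
          (((FF (Nm N) (x / NQ N z)).card : ℝ) - κ * (x / NQ N z)) := by
    rw [Finset.mul_sum, ← Finset.sum_add_distrib]
    apply Finset.sum_congr rfl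
    intro z _
    ring
  have h2 : |∑ z ∈ FF (NQ N) x, Real.log (N z.1) *
          (((FF (Nm N) (x / NQ N z)).card : ℝ) - κ * (x / NQ N z))| ≤ C * (K3 * x) := by
    refine (Finset.abs_sum_le_sum_abs _ _).trans ?_
    calc _ ≤ ∑ z ∈ FF (NQ N) x, C * (Real.log (N z.1) * (x / NQ N z) ^ τ) := by
          apply Finset.sum_le_sum
          intro z _
          have hp : (1 : ℝ) ≤ NQ N z := by exact_mod_cast NQ_pos hN z
          rw [abs_mul, abs_of_nonneg (logN_nonneg z.1)]
          have := hI (x / NQ N z) (by positivity)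
          calc _ ≤ Real.log (N z.1) * (C * (x / NQ N z) ^ τ) :=
                mul_le_mul_of_nonneg_left this (logN_nonneg _)
            _ = _ := by ring
      _ = C * ∑ z ∈ FF (NQ N) x, Real.log (N z.1) * (x / NQ N z) ^ τ := by rw [Finset.mul_sum]
      _ ≤ _ := mul_le_mul_of_nonneg_left (hK3 x hx0) hC
  rw [e] at h1
  set U := ∑ z ∈ FF (NQ N) x, Real.log (N z.1) / NQ N z
  set V := ∑ z ∈ FF (NQ N) x, Real.log (N z.1) *
          (((FF (Nm N) (x / NQ N z)).card : ℝ) - κ * (x / NQ N z))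
  have h3 : K1 * x ^ σ ≤ K1 * x := mul_le_mul_of_nonneg_left hpow hK10
  have h4 : |κ * x * (U - Real.log x)| ≤ (K1 + κ + C * K3) * x := by
    rw [abs_le] at *
    constructor <;> nlinarith
  rw [abs_mul, abs_of_pos (by positivity)] at h4
  rw [le_div_iff₀ hκ]
  have : (|U - Real.log x| * κ) * x ≤ (K1 + κ + C * K3) * x := by linarith
  exact le_of_mul_le_mul_right this hx0

include hN hM hκ hτ1 hC hI in
lemma summ_inj {ι : Type*} {ν : ι → ℕ} (j : ι → (P →₀ ℕ)) (hj : Function.Injective j)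
    (hle : ∀ i, Nm N (j i) = ν i) (s : ℝ) (hs : 1 < s) :
    Summable fun i => (ν i : ℝ) ^ (-s) := by
  apply lemV (LFin_of_inj hM j hj hle) _ (κ + C) (by positivity) _ s hs
  · intro i; rw [← hle]; exact Nm_pos N hN _
  · intro x hx
    have h1 := card_le_of_inj hM j hj hle x
    have h2 := card_le_lin hτ1 hC hI x hx
    have h3 : ((FF ν x).card : ℝ) ≤ (FF (Nm N) x).card := by exact_mod_cast h1
    linarith

include hN hM hκ hτ0 hτ1 hC hI in
lemma mertens_one : ∃ B : ℝ, 0 ≤ B ∧ ∀ x : ℝ, 1 ≤ x →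
    |∑ p ∈ FF N x, Real.log (N p) / N p - Real.log x| ≤ B := by
  obtain ⟨B, hB⟩ := mertens_one_psi hN hM hκ hτ0 hτ1 hC hI
  have hQ := LFin_Q hM
  have hP := LFin_P hM
  have hsP := summ_inj hN hM hκ hτ1 hC hI _ single_inj1 (ν := N) (by simp [Nm_single]) (3 / 2)
    (by norm_num)
  have hgeo : Summable fun k : ℕ => ((1 : ℝ) / 2) ^ k :=
    summable_geometric_of_lt_one (by norm_num) (by norm_num)
  have hprod : Summable fun z : P × ℕ => (2 * (N z.1 : ℝ) ^ (-(3 / 2) : ℝ)) * ((1 : ℝ) / 2) ^ z.2 :=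
    (hsP.mul_left 2).mul_of_nonneg hgeo (fun _ => by positivity) (fun _ => by positivity)
  set T := ∑' z : P × ℕ, (2 * (N z.1 : ℝ) ^ (-(3 / 2) : ℝ)) * ((1 : ℝ) / 2) ^ z.2 with hT
  have hT0 : 0 ≤ T := tsum_nonneg fun _ => by positivity
  have hB0 : 0 ≤ B := (abs_nonneg _).trans (hB 1 le_rfl)
  refine ⟨B + T, by positivity, ?_⟩
  intro x hx
  have h1 := hB x hx
  set G := (FF (NQ N) x).filter (fun z => z.2 ≠ 0) with hG
  have e : ∑ z ∈ FF (NQ N) x, Real.log (N z.1) / NQ N z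
      = ∑ p ∈ FF N x, Real.log (N p) / N p + ∑ z ∈ G, Real.log (N z.1) / NQ N z := by
    rw [← Finset.sum_filter_add_sum_filter_not (FF (NQ N) x) (fun z => z.2 = 0)]
    congr 1
    symm
    apply Finset.sum_bij (fun p _ => (p, 0))
    · intro p hp
      rw [hP] at hp
      rw [Finset.mem_filter, hQ]
      simpa [NQ] using hp
    · intro a _ b _ h
      simpa using h
    · rintro ⟨p, k⟩ hz
      rw [Finset.mem_filter, hQ] at hz
      obtain ⟨h1, h2⟩ := hz
      simp only at h2
      subst h2
      exact ⟨p, (hP x p).2 (by simpa [NQ] using h1), rfl⟩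
    · intro p _
      simp [NQ]
  have hG0 : 0 ≤ ∑ z ∈ G, Real.log (N z.1) / NQ N z :=
    Finset.sum_nonneg fun z _ => div_nonneg (logN_nonneg _) (by positivity)
  have hGT : ∑ z ∈ G, Real.log (N z.1) / NQ N z ≤ T := by
    set j : P × ℕ → P × ℕ := fun z => (z.1, z.2 - 1) with hj
    have hjinj : Set.InjOn j G := by
      rintro ⟨p, k⟩ hz ⟨q, l⟩ hw h
      have h1 := (Finset.mem_filter.1 hz).2
      have h2 := (Finset.mem_filter.1 hw).2
      simp only [hj, Prod.mk.injEq] at h h1 h2 ⊢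
      exact ⟨h.1, by omega⟩
    calc ∑ z ∈ G, Real.log (N z.1) / NQ N z
        ≤ ∑ z ∈ G, (2 * (N (j z).1 : ℝ) ^ (-(3 / 2) : ℝ)) * ((1 : ℝ) / 2) ^ (j z).2 := by
          apply Finset.sum_le_sum
          rintro ⟨p, k⟩ hz
          have h1 := (Finset.mem_filter.1 hz).2
          simp only at h1
          obtain ⟨l, rfl⟩ := Nat.exists_eq_succ_of_ne_zero h1
          simp only [hj, NQ, Nat.succ_eq_add_one, Nat.add_sub_cancel]
          have hp2 : (2 : ℝ) ≤ N p := by exact_mod_cast hN p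
          have hp0 : (0 : ℝ) < N p := by linarith
          have hlog : Real.log (N p) ≤ (N p : ℝ) ^ (1 / 2 : ℝ) / (1 / 2) :=
            Real.log_le_rpow_div hp0.le (by norm_num)
          push_cast
          rw [div_le_iff₀ (by positivity)]
          have e1 : (N p : ℝ) ^ (l + 1 + 1) = (N p : ℝ) ^ l * (N p : ℝ) ^ (2 : ℝ) := by
            rw [Real.rpow_two]; ring
          have e2 : (N p : ℝ) ^ (-(3 / 2) : ℝ) * (N p : ℝ) ^ (2 : ℝ) = (N p : ℝ) ^ (1 / 2 : ℝ) := by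
            rw [← Real.rpow_add hp0]; norm_num
          have e3 : (1 : ℝ) ≤ (1 / 2) ^ l * (N p : ℝ) ^ l := by
            rw [← mul_pow]; apply one_le_pow₀; linarith
          have hh : 0 < (N p : ℝ) ^ (1 / 2 : ℝ) := by positivity
          calc Real.log (N p) ≤ 2 * (N p : ℝ) ^ (1 / 2 : ℝ) * 1 := by linarith
            _ ≤ 2 * (N p : ℝ) ^ (1 / 2 : ℝ) * ((1 / 2) ^ l * (N p : ℝ) ^ l) := by gcongr
            _ = _ := by rw [e1, ← e2]; ring
      _ = ∑ z ∈ G.image j, (2 * (N z.1 : ℝ) ^ (-(3 / 2) : ℝ)) * ((1 : ℝ) / 2) ^ z.2 := by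
          rw [Finset.sum_image hjinj]
      _ ≤ T := hprod.sum_le_tsum _ (fun _ _ => by positivity)
  rw [e] at h1
  rw [abs_le] at *
  constructor <;> linarith

include hN hM hκ hτ0 hτ1 hC hI in
lemma prime_pow_sum (σ : ℝ) (hσ0 : 0 < σ) (hσ1 : σ < 1) : ∃ K : ℝ, 0 ≤ K ∧ ∀ x : ℝ, 2 ≤ x →
    ∑ p ∈ FF N x, (x / N p) ^ σ ≤ K * (x / Real.log x) := by
  obtain ⟨B, hB0, hB⟩ := chebyshev_psi hN hM hκ hτ0 hτ1 hC hI
  have hP := LFin_P hM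
  have hQ := LFin_Q hM
  have hN1 : ∀ p, 1 ≤ N p := fun p => by have := hN p; omega
  obtain ⟨K1, hK10, hK1⟩ := lemW hP hN1 (fun p => Real.log (N p))
    (fun z => logN_nonneg z) B hB0 (by
      intro x hx
      refine le_trans ?_ (hB x hx)
      unfold psi
      calc ∑ p ∈ FF N x, Real.log (N p)
          = ∑ z ∈ (FF N x).image (fun p => (p, 0)), Real.log (N z.1) := by
            rw [Finset.sum_image]
            intro a _ b _ h
            simpa using h
        _ ≤ _ := by
            apply Finset.sum_le_sum_of_subset_of_nonneg
            · intro z hz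
              rw [Finset.mem_image] at hz
              obtain ⟨p, hp, rfl⟩ := hz
              rw [hP] at hp
              rw [hQ]
              simpa [NQ] using hp
            · intro z _ _
              exact logN_nonneg _) σ hσ0.le hσ1
  obtain ⟨K2, hK20, hK2⟩ := lemW hP hN1 (fun _ => (1 : ℝ)) (fun _ => zero_le_one)
    (κ + C) (by positivity) (by
      intro x hx
      have h1 := card_le_of_inj hM _ single_inj1 (ν := N) (by simp [Nm_single]) x
      have h2 := card_le_lin hτ1 hC hI x hx
      have h3 : ((FF N x).card : ℝ) ≤ (FF (Nm N) x).card := by exact_mod_cast h1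
      simp only [Finset.sum_const, nsmul_eq_mul, mul_one]
      linarith) σ hσ0.le hσ1
  set δ := (1 - σ) / 2 with hδ
  have hδ0 : 0 < δ := by rw [hδ]; linarith
  refine ⟨K2 / δ + 2 * K1, by positivity, ?_⟩
  intro x hx
  have hx0 : 0 < x := by linarith
  have hlog : 0 < Real.log x := Real.log_pos (by linarith)
  set y := x ^ (1 / 2 : ℝ) with hy
  have hy0 : 0 < y := by positivity
  have hyx : y ≤ x := by
    calc y ≤ x ^ (1 : ℝ) := Real.rpow_le_rpow_of_exponent_le (by linarith) (by norm_num)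
      _ = x := by simp
  rw [← Finset.sum_sdiff (hP.mono hyx)]
  have h1 : ∑ p ∈ FF N y, (x / N p) ^ σ ≤ K2 / δ * (x / Real.log x) := by
    have e1 : ∀ p ∈ FF N y, (x / N p) ^ σ = (x / y) ^ σ * (1 * (y / N p) ^ σ) := by
      intro p _
      have := hN1 p
      rw [one_mul, ← Real.mul_rpow (by positivity) (by positivity)]
      congr 1
      field_simp
    rw [Finset.sum_congr rfl e1, ← Finset.mul_sum]
    calc (x / y) ^ σ * ∑ p ∈ FF N y, 1 * (y / N p) ^ σ ≤ (x / y) ^ σ * (K2 * y) := by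
          gcongr
          exact hK2 y hy0
      _ = K2 * x ^ (1 - δ) := by
          have : (x / y) = x ^ (1 / 2 : ℝ) := by
            rw [hy, div_eq_iff (by positivity), ← Real.rpow_add hx0]; norm_num
          rw [this, hy, ← Real.rpow_mul hx0.le, mul_left_comm, ← Real.rpow_add hx0]
          congr 2
          rw [hδ]; ring
      _ ≤ K2 * (x / Real.log x / δ) := by
          gcongr
          rw [div_div, le_div_iff₀ (by positivity)]
          have : Real.log x ≤ x ^ δ / δ := Real.log_le_rpow_div hx0.le hδ0
          rw [le_div_iff₀ hδ0] at this
          calc x ^ (1 - δ) * (Real.log x * δ) ≤ x ^ (1 - δ) * x ^ δ := by gcongr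
            _ = x := by rw [← Real.rpow_add hx0]; simp
      _ = _ := by ring
  have h2 : ∑ p ∈ FF N x \ FF N y, (x / N p) ^ σ ≤ 2 * K1 * (x / Real.log x) := by
    calc ∑ p ∈ FF N x \ FF N y, (x / N p) ^ σ
        ≤ ∑ p ∈ FF N x \ FF N y, (2 / Real.log x) * (Real.log (N p) * (x / N p) ^ σ) := by
          apply Finset.sum_le_sum
          intro p hp
          rw [Finset.mem_sdiff, hP, hP, not_le] at hp
          have : Real.log y ≤ Real.log (N p) := Real.log_le_log hy0 hp.2.le
          rw [hy, Real.log_rpow hx0] at this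
          have h3 : 1 ≤ (2 / Real.log x) * Real.log (N p) := by
            rw [div_mul_eq_mul_div, le_div_iff₀ hlog]; linarith
          rw [← mul_assoc]
          exact le_mul_of_one_le_left (by positivity) h3
      _ ≤ ∑ p ∈ FF N x, (2 / Real.log x) * (Real.log (N p) * (x / N p) ^ σ) := by
          apply Finset.sum_le_sum_of_subset_of_nonneg Finset.sdiff_subset
          intro p _ _
          have := logN_nonneg (N := N) p
          positivity
      _ = (2 / Real.log x) * ∑ p ∈ FF N x, (Real.log (N p) * (x / N p) ^ σ) := by
          rw [Finset.mul_sum]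
      _ ≤ (2 / Real.log x) * (K1 * x) := by
          gcongr
          exact hK1 x hx0
      _ = _ := by ring
  rw [add_mul]
  linarith

end chebyshev

section mertens
variable {P : Type*} {N : P → ℕ}

variable (hN : ∀ p, 2 ≤ N p) (hM : LFin (Nm N) (FF (Nm N))) {κ τ C : ℝ} (hκ : 0 < κ)
  (hτ0 : 0 < τ) (hτ1 : τ < 1) (hC : 0 ≤ C)
  (hI : ∀ y : ℝ, 0 < y → |((FF (Nm N) y).card : ℝ) - κ * y| ≤ C * y ^ τ)

include hN hM hκ hτ0 hτ1 hC hI in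
lemma mertens_two : ∃ K : ℝ, 0 ≤ K ∧ ∀ y x : ℝ, 2 ≤ y → y ≤ x →
    |(∑ p ∈ FF N x, 1 / (N p : ℝ) - Real.log (Real.log x))
      - (∑ p ∈ FF N y, 1 / (N p : ℝ) - Real.log (Real.log y))| ≤ K / Real.log y := by
  obtain ⟨B, hB0, hB⟩ := mertens_one hN hM hκ hτ0 hτ1 hC hI
  have hP := LFin_P hM
  refine ⟨3 * B, by positivity, ?_⟩
  intro y x hy hyx
  have hlt : ∀ t ∈ Set.Icc y x, 0 < t ∧ 0 < Real.log t := by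
    intro t ht
    have := ht.1
    exact ⟨by linarith, Real.log_pos (by linarith)⟩
  obtain ⟨hy0, hly⟩ := hlt y ⟨le_rfl, hyx⟩
  obtain ⟨hx0, hlx⟩ := hlt x ⟨hyx, le_rfl⟩
  set g : ℝ → ℝ := fun t => t⁻¹ / Real.log t ^ 2 with hg
  have hgc : ContinuousOn g (Set.Icc y x) := by
    apply ContinuousOn.div
    · exact ContinuousOn.inv₀ continuousOn_id fun t ht => (hlt t ht).1.ne'
    · exact (ContinuousOn.log continuousOn_id fun t ht => (hlt t ht).1.ne').pow 2
    · intro t ht; exact pow_ne_zero 2 (hlt t ht).2.ne'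
  have hder : ∀ t ∈ Set.Icc y x, HasDerivAt (fun t => (Real.log t)⁻¹) (-g t) t := by
    intro t ht
    have := (Real.hasDerivAt_log (hlt t ht).1.ne').fun_inv (hlt t ht).2.ne'
    rwa [neg_div] at this
  have hderiv : ∀ t ∈ Set.Icc y x, deriv (fun t => (Real.log t)⁻¹) t = -g t := fun t ht =>
    (hder t ht).deriv
  set w : P → ℝ := fun p => Real.log (N p) / N p with hw
  have hgi : MeasureTheory.IntegrableOn g (Set.Icc y x) := hgc.integrableOn_Icc
  have hab := abel_sum hP w (a := y) (b := x) hy0.le hyx (fun t => (Real.log t)⁻¹)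
    (fun t ht => (hder t ht).differentiableAt) (by
      apply hgi.neg.congr_fun _ measurableSet_Icc
      intro t ht
      rw [hderiv t ht]; rfl)
  have hint : ∫ t in Set.Ioc y x, deriv (fun t => (Real.log t)⁻¹) t * ∑ i ∈ FF N t, w i
      = - ∫ t in Set.Ioc y x, g t * ∑ i ∈ FF N t, w i := by
    rw [← MeasureTheory.integral_neg]
    apply MeasureTheory.setIntegral_congr_fun measurableSet_Ioc
    intro t ht
    simp only
    rw [hderiv t (Set.Ioc_subset_Icc_self ht)]
    ring
  have hwf : ∀ p, w p * (Real.log (N p))⁻¹ = 1 / (N p : ℝ) := by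
    intro p
    have h2 : (2 : ℝ) ≤ N p := by exact_mod_cast hN p
    have := Real.log_pos (show (1 : ℝ) < N p by linarith)
    simp only [hw]
    field_simp
  rw [hint] at hab
  simp only [hwf] at hab
  -- the three integrals
  have hgU := abelInt hP w hy0.le g hgi (b := x)
  have hgl : MeasureTheory.IntegrableOn (fun t => g t * Real.log t) (Set.Icc y x) := by
    apply ContinuousOn.integrableOn_Icc
    exact hgc.mul (ContinuousOn.log continuousOn_id fun t ht => (hlt t ht).1.ne')
  have i1 : ∫ t in Set.Ioc y x, g t * Real.log t = Real.log (Real.log x) - Real.log (Real.log y) := by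
    rw [← intervalIntegral.integral_of_le hyx]
    apply intervalIntegral.integral_eq_sub_of_hasDerivAt (f := fun t => Real.log (Real.log t))
    · intro t ht
      rw [Set.uIcc_of_le hyx] at ht
      have := (Real.hasDerivAt_log (hlt t ht).1.ne').log (hlt t ht).2.ne'
      refine this.congr_deriv ?_
      have h2 := (hlt t ht).2
      have h1 := (hlt t ht).1
      simp only [hg]
      field_simp
    · rw [intervalIntegrable_iff_integrableOn_Icc_of_le hyx]
      exact hgl
  have i2 : ∫ t in Set.Ioc y x, g t = (Real.log y)⁻¹ - (Real.log x)⁻¹ := by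
    rw [← intervalIntegral.integral_of_le hyx]
    rw [intervalIntegral.integral_eq_sub_of_hasDerivAt (f := fun t => -(Real.log t)⁻¹)]
    · ring
    · intro t ht
      rw [Set.uIcc_of_le hyx] at ht
      simpa using (hder t ht).fun_neg
    · rw [intervalIntegrable_iff_integrableOn_Icc_of_le hyx]
      exact hgi
  have i3 : |(∫ t in Set.Ioc y x, g t * ∑ i ∈ FF N t, w i) - ∫ t in Set.Ioc y x, g t * Real.log t|
      ≤ B * ((Real.log y)⁻¹ - (Real.log x)⁻¹) := by
    rw [← MeasureTheory.integral_sub (hgU.mono_set Set.Ioc_subset_Icc_self)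
      (hgl.mono_set Set.Ioc_subset_Icc_self), ← i2, ← MeasureTheory.integral_const_mul,
      ← Real.norm_eq_abs]
    apply MeasureTheory.norm_integral_le_of_norm_le
    · exact (hgi.mono_set Set.Ioc_subset_Icc_self).const_mul B
    · rw [MeasureTheory.ae_restrict_iff' measurableSet_Ioc]
      apply Eventually.of_forall
      intro t ht
      obtain ⟨ht0, hlt0⟩ := hlt t (Set.Ioc_subset_Icc_self ht)
      have hg0 : 0 ≤ g t := by simp only [hg]; positivity
      rw [← mul_sub, norm_mul, Real.norm_eq_abs, Real.norm_eq_abs, abs_of_nonneg hg0, mul_comm]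
      apply mul_le_mul_of_nonneg_right _ hg0
      apply hB
      have := ht.1
      linarith
  have hUx := hB x (by linarith)
  have hUy := hB y (by linarith)
  set J := ∫ t in Set.Ioc y x, g t * ∑ i ∈ FF N t, w i
  set Ux := ∑ p ∈ FF N x, w p with hUxd
  set Uy := ∑ p ∈ FF N y, w p with hUyd
  have e : (∑ p ∈ FF N x, 1 / (N p : ℝ) - Real.log (Real.log x))
      - (∑ p ∈ FF N y, 1 / (N p : ℝ) - Real.log (Real.log y))
      = (Real.log x)⁻¹ * (Ux - Real.log x) - (Real.log y)⁻¹ * (Uy - Real.log y)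
        + (J - ∫ t in Set.Ioc y x, g t * Real.log t) := by
    rw [i1]
    have h1 : (Real.log x)⁻¹ * Real.log x = 1 := inv_mul_cancel₀ hlx.ne'
    have h2 : (Real.log y)⁻¹ * Real.log y = 1 := inv_mul_cancel₀ hly.ne'
    linear_combination hab + h1 - h2
  rw [e]
  have hxy : (Real.log x)⁻¹ ≤ (Real.log y)⁻¹ := by
    apply inv_anti₀ hly
    exact Real.log_le_log hy0 hyx
  have hxi : 0 < (Real.log x)⁻¹ := by positivity
  have a1 : |(Real.log x)⁻¹ * (Ux - Real.log x)| ≤ (Real.log y)⁻¹ * B := by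
    rw [abs_mul, abs_of_pos hxi]
    exact mul_le_mul hxy hUx (abs_nonneg _) (by positivity)
  have a2 : |(Real.log y)⁻¹ * (Uy - Real.log y)| ≤ (Real.log y)⁻¹ * B := by
    rw [abs_mul, abs_of_pos (show 0 < (Real.log y)⁻¹ by positivity)]
    exact mul_le_mul_of_nonneg_left hUy (by positivity)
  refine (abs_add_le _ _).trans ?_
  have a3 := abs_sub ((Real.log x)⁻¹ * (Ux - Real.log x)) ((Real.log y)⁻¹ * (Uy - Real.log y))
  rw [div_eq_mul_inv]
  nlinarith

include hN hM hκ hτ0 hτ1 hC hI in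
lemma mertens_A (A : ℝ) (hA : IsMertens N A) : ∃ K : ℝ, 0 ≤ K ∧ ∀ y : ℝ, 2 ≤ y →
    |∑ p ∈ FF N y, 1 / (N p : ℝ) - Real.log (Real.log y) - A| ≤ K / Real.log y := by
  obtain ⟨K, hK0, hK⟩ := mertens_two hN hM hκ hτ0 hτ1 hC hI
  have hP := LFin_P hM
  refine ⟨K, hK0, ?_⟩
  intro y hy
  unfold IsMertens at hA
  have e : ∀ x : ℝ, ∑ᶠ p ∈ {p : P | (N p : ℝ) ≤ x}, 1 / (N p : ℝ)
      = ∑ p ∈ FF N x, 1 / (N p : ℝ) := by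
    intro x
    rw [← finsum_mem_coe_finset]
    have : {p : P | (N p : ℝ) ≤ x} = ↑(FF N x) := by
      ext p; simp [hP x p]
    rw [this]
  simp only [e] at hA
  have h1 := (hA.sub_const (∑ p ∈ FF N y, 1 / (N p : ℝ) - Real.log (Real.log y))).abs
  have h2 := le_of_tendsto h1 ((eventually_ge_atTop y).mono fun x hx => hK y x hy hx)
  rw [abs_sub_comm]
  exact h2

/-- number of `h`-free elements up to `y` -/
def Scount (N : P → ℕ) (h : ℕ) (y : ℝ) : ℕ := ((FF (Nm N) y).filter (HFree h)).card

/-- number of `h`-free elements up to `y` divisible by `p` -/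
def Dcount (N : P → ℕ) (h : ℕ) (p : P) (y : ℝ) : ℕ :=
  ((FF (Nm N) y).filter (fun m => HFree h m ∧ 1 ≤ m p)).card

include hN hM hκ hτ1 hC hI in
lemma zeta_pos (s : ℝ) (hs : 1 < s) : 0 < zetaM N s := by
  have hsM := summ_inj hN hM hκ hτ1 hC hI id Function.injective_id (ν := Nm N) (by simp) s hs
  have e : ∀ m : P →₀ ℕ, 1 / (Nm N m : ℝ) ^ s = (Nm N m : ℝ) ^ (-s) := by
    intro m
    rw [Real.rpow_neg (by positivity), one_div]
  unfold zetaM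
  simp only [e]
  apply hsM.tsum_pos (fun _ => by positivity) 0
  simp [Nm_zero]

include hN hM hκ hτ1 hC hI in
lemma S_asymp (h : ℕ) (hh : 2 ≤ h) (hτ : 3 / 4 ≤ τ) : ∃ K : ℝ, 0 ≤ K ∧ ∀ y : ℝ, 0 < y →
    |(Scount N h y : ℝ) - κ / zetaM N h * y| ≤ K * y ^ τ := by
  have hA := LFin_A hM
  have hh' : (2 : ℝ) ≤ h := by exact_mod_cast hh
  have hsM := summ_inj hN hM hκ hτ1 hC hI id Function.injective_id (ν := Nm N) (by simp) h
    (by linarith)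
  have hsA := summ_inj hN hM hκ hτ1 hC hI _ chi_inj (ν := NA N) (by simp [Nm_chi]) h
    (by linarith)
  have hsA2 := summ_inj hN hM hκ hτ1 hC hI _ chi_inj (ν := NA N) (by simp [Nm_chi]) (h * τ)
    (by nlinarith)
  have hsA' : Summable fun A : Finset P => (-1 : ℝ) ^ A.card * (NA N A : ℝ) ^ (-(h : ℝ)) := by
    apply Summable.of_norm
    simpa [abs_mul, abs_pow, abs_of_nonneg (Real.rpow_nonneg (Nat.cast_nonneg _) _)] using hsA
  have hzi := zeta_inv (h : ℝ) hsM hsA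
  have hzp := zeta_pos hN hM hκ hτ1 hC hI (h : ℝ) (by linarith)
  have hze : zetaM N h = ∑' m : P →₀ ℕ, (Nm N m : ℝ) ^ (-(h : ℝ)) := by
    unfold zetaM
    apply tsum_congr
    intro m
    rw [Real.rpow_neg (by positivity), one_div]
  rw [← hze] at hzi
  set μ := ∑' A : Finset P, (-1 : ℝ) ^ A.card * (NA N A : ℝ) ^ (-(h : ℝ)) with hμ
  have hμe : κ / zetaM N h = κ * μ := by
    rw [div_eq_iff hzp.ne', mul_assoc, hzi, mul_one]
  refine ⟨C * ∑' A : Finset P, (NA N A : ℝ) ^ (-((h : ℝ) * τ)), ?_, ?_⟩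
  · apply mul_nonneg hC
    exact tsum_nonneg fun _ => by positivity
  intro y hy
  have hS := sieve_fin hN hM h (by omega) (fun _ => (1 : ℝ)) y
  simp only [Finset.sum_const, nsmul_eq_mul, mul_one] at hS
  have hz : ∀ A ∉ FF (NA N) y,
      (-1 : ℝ) ^ A.card * ((FF (Nm N) (y / (NA N A : ℝ) ^ h)).card : ℝ) = 0 := by
    intro A hAy
    rw [hA, not_le] at hAy
    have h1 : (1 : ℝ) ≤ NA N A := by exact_mod_cast NA_pos N hN A
    rw [hM.empty (Nm_pos N hN)]
    · simp
    · have : (NA N A : ℝ) ≤ (NA N A : ℝ) ^ h := le_self_pow₀ h1 (by omega)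
      rw [div_lt_one (by positivity)]
      linarith
  have hs1 := hasSum_sum_of_ne_finset_zero (L := SummationFilter.unconditional _) hz
  rw [hS] at hs1
  have hs2 := hs1.sub (hsA'.hasSum.mul_left (κ * y))
  rw [← hμ] at hs2
  have e : (Scount N h y : ℝ) - κ / zetaM N h * y
      = ((FF (Nm N) y).filter (HFree h)).card - κ * y * μ := by
    rw [hμe, Scount]; ring
  rw [e, ← hs2.tsum_eq, ← Real.norm_eq_abs]
  have hb := hsA2.hasSum.mul_left (C * y ^ τ)
  refine (tsum_of_norm_bounded hb ?_).trans (le_of_eq (by ring))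
  intro A
  have h1 : (1 : ℝ) ≤ NA N A := by exact_mod_cast NA_pos N hN A
  have h0 : (0 : ℝ) < NA N A := by linarith
  have e2 : (NA N A : ℝ) ^ (-(h : ℝ)) = ((NA N A : ℝ) ^ h)⁻¹ := by
    rw [Real.rpow_neg h0.le, Real.rpow_natCast]
  rw [mul_left_comm, ← mul_sub, norm_mul, norm_pow, norm_neg, norm_one, one_pow, one_mul,
    Real.norm_eq_abs, e2, mul_assoc, ← div_eq_mul_inv]
  refine (hI _ (by positivity)).trans (le_of_eq ?_)
  rw [Real.div_rpow hy.le (by positivity), Real.rpow_neg h0.le, Real.rpow_mul h0.le,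
    Real.rpow_natCast]
  ring

include hN hM in
lemma D_rec (h : ℕ) (hh : 2 ≤ h) (p : P) (x : ℝ) :
    Dcount N h p x + Scount N h (x / (N p : ℝ) ^ h)
      = Scount N h (x / N p) + Dcount N h p (x / (N p : ℝ) ^ h) := by
  have hp2 : (2 : ℝ) ≤ N p := by exact_mod_cast hN p
  have hp0 : (0 : ℝ) < N p := by linarith
  have hsplit : Scount N h (x / (N p : ℝ) ^ h) = Dcount N h p (x / (N p : ℝ) ^ h)
      + ((FF (Nm N) (x / (N p : ℝ) ^ h)).filter (fun m => HFree h m ∧ m p = 0)).card := by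
    unfold Scount Dcount
    rw [← Finset.card_filter_add_card_filter_not (s := (FF (Nm N) (x / (N p : ℝ) ^ h)).filter (HFree h))
      (fun m => 1 ≤ m p), Finset.filter_filter, Finset.filter_filter]
    congr 2
    ext m
    simp only [Finset.mem_filter, not_le, Nat.lt_one_iff]
  have hsplit2 : Scount N h (x / N p)
      = ((FF (Nm N) (x / N p)).filter (fun m => HFree h m ∧ m p + 1 ≤ h - 1)).card
      + ((FF (Nm N) (x / N p)).filter (fun m => HFree h m ∧ ¬ (m p + 1 ≤ h - 1))).card := by
    unfold Scount
    rw [← Finset.card_filter_add_card_filter_not (s := (FF (Nm N) (x / N p)).filter (HFree h))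
      (fun m => m p + 1 ≤ h - 1), Finset.filter_filter, Finset.filter_filter]
  have b1 : ((FF (Nm N) (x / N p)).filter (fun m => HFree h m ∧ m p + 1 ≤ h - 1)).card
      = Dcount N h p x := by
    apply Finset.card_bij (fun m _ => m + Finsupp.single p 1)
    · intro m hm
      rw [Finset.mem_filter, hM, le_div_iff₀ hp0] at hm
      rw [Finset.mem_filter, hM, Nm_add, Nm_single]
      refine ⟨by push_cast; simpa using hm.1, ?_, by simp⟩
      intro q
      have := hm.2.1 q
      by_cases hq : q = p
      · subst hq; simpa using hm.2.2
      · simpa [Finsupp.single_apply, Ne.symm hq] using this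
    · intro a _ b _ hab
      simpa using hab
    · intro n hn
      rw [Finset.mem_filter, hM] at hn
      have hle : Finsupp.single p 1 ≤ n := by
        rw [Finsupp.single_le_iff]; exact hn.2.2
      refine ⟨n - Finsupp.single p 1, ?_, tsub_add_cancel_of_le hle⟩
      rw [Finset.mem_filter, hM, le_div_iff₀ hp0]
      have h1 := hn.1
      rw [← tsub_add_cancel_of_le hle, Nm_add, Nm_single] at h1
      refine ⟨by push_cast at h1; simpa using h1, ?_, ?_⟩
      · intro q
        exact (Nat.sub_le _ _).trans (hn.2.1 q)
      · have h2 := hn.2.1 p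
        have h3 := hn.2.2
        simp
        omega
  have b2 : ((FF (Nm N) (x / (N p : ℝ) ^ h)).filter (fun m => HFree h m ∧ m p = 0)).card
      = ((FF (Nm N) (x / N p)).filter (fun m => HFree h m ∧ ¬ (m p + 1 ≤ h - 1))).card := by
    have hpow : (N p : ℝ) ^ h = (N p : ℝ) ^ (h - 1) * N p := by
      rw [← pow_succ]; congr 1; omega
    apply Finset.card_bij (fun m _ => m + Finsupp.single p (h - 1))
    · intro m hm
      rw [Finset.mem_filter, hM, le_div_iff₀ (by positivity), hpow, ← mul_assoc] at hm
      rw [Finset.mem_filter, hM, Nm_add, Nm_single, le_div_iff₀ hp0]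
      refine ⟨by push_cast; exact hm.1, ?_, by simp⟩
      intro q
      have := hm.2.1 q
      by_cases hq : q = p
      · subst hq; simp [hm.2.2]
      · simpa [Finsupp.single_apply, Ne.symm hq] using this
    · intro a _ b _ hab
      simpa using hab
    · intro n hn
      rw [Finset.mem_filter, hM, le_div_iff₀ hp0] at hn
      have h2 := hn.2.1 p
      have h3 := hn.2.2
      have hle : Finsupp.single p (h - 1) ≤ n := by
        rw [Finsupp.single_le_iff]; omega
      refine ⟨n - Finsupp.single p (h - 1), ?_, tsub_add_cancel_of_le hle⟩
      rw [Finset.mem_filter, hM, le_div_iff₀ (by positivity), hpow, ← mul_assoc]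
      have h1 := hn.1
      rw [← tsub_add_cancel_of_le hle, Nm_add, Nm_single] at h1
      refine ⟨by push_cast at h1; simpa using h1, ?_, ?_⟩
      · intro q
        exact (Nat.sub_le _ _).trans (hn.2.1 q)
      · simp
        omega
  rw [hsplit2, hsplit, b1, b2]
  ring

include hN hM in
lemma D_zero (h : ℕ) (p : P) (x : ℝ) (hx : x < N p) : Dcount N h p x = 0 := by
  unfold Dcount
  rw [Finset.card_eq_zero, Finset.eq_empty_iff_forall_notMem]
  intro m hm
  rw [Finset.mem_filter, hM] at hm
  have hle : Finsupp.single p 1 ≤ m := by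
    rw [Finsupp.single_le_iff]; exact hm.2.2
  have h1 := hm.1
  rw [← tsub_add_cancel_of_le hle, Nm_add, Nm_single] at h1
  have h2 : (1 : ℝ) ≤ Nm N (m - Finsupp.single p 1) := by exact_mod_cast Nm_pos N hN _
  push_cast at h1
  nlinarith

/-- the local correction -/
def bcoef (N : P → ℕ) (h : ℕ) (p : P) : ℝ := ((N p : ℝ) - 1) / ((N p : ℝ) * ((N p : ℝ) ^ h - 1))

include hN in
lemma bcoef_bounds (h : ℕ) (hh : 2 ≤ h) (p : P) :
    0 ≤ bcoef N h p ∧ bcoef N h p ≤ 1 / (N p : ℝ) ^ 2 := by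
  have hp2 : (2 : ℝ) ≤ N p := by exact_mod_cast hN p
  set q : ℝ := (N p : ℝ) with hq
  have hpow : q ^ 2 ≤ q ^ h := pow_le_pow_right₀ (by linarith) hh
  have h1 : 0 < q ^ h - 1 := by nlinarith
  unfold bcoef
  rw [← hq]
  constructor
  · apply div_nonneg (by linarith) (by positivity)
  · rw [div_le_div_iff₀ (by positivity) (by positivity)]
    nlinarith

include hN hM in
lemma D_asymp (hτ1 : τ < 1) (h : ℕ) (hh : 2 ≤ h) (hτ : 3 / 4 ≤ τ) (c K : ℝ) (hc : 0 ≤ c) (hK : 0 ≤ K)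
    (hS : ∀ y : ℝ, 0 < y → |(Scount N h y : ℝ) - c * y| ≤ K * y ^ τ) (p : P) (x : ℝ)
    (hx : 0 < x) :
    |(Dcount N h p x : ℝ) - c * (1 / (N p : ℝ) - bcoef N h p) * x| ≤ (c + 4 * K) * (x / N p) ^ τ := by
  have hp2 : (2 : ℝ) ≤ N p := by exact_mod_cast hN p
  obtain ⟨hb0, hb1⟩ := bcoef_bounds hN h hh p
  have hrec := D_rec hN hM h hh p
  have hzero := D_zero hN hM h p
  set q : ℝ := (N p : ℝ) with hq
  have hq0 : 0 < q := by linarith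
  have hpow : q ^ 2 ≤ q ^ h := pow_le_pow_right₀ (by linarith) hh
  have hqh : 0 < q ^ h - 1 := by nlinarith
  set a := 1 / q - bcoef N h p with ha
  have ha1 : a ≤ 1 / q := by linarith
  have ha0 : 0 ≤ a := by
    have : 1 / q ^ 2 ≤ 1 / q := by
      apply one_div_le_one_div_of_le hq0; nlinarith
    linarith
  have harec : a = 1 / q - 1 / q ^ h + a / q ^ h := by
    rw [ha, bcoef, ← hq]
    have : q ^ h - 1 ≠ 0 := hqh.ne'
    field_simp
    ring
  have key : ∀ n : ℕ, ∀ x : ℝ, 0 < x → x < 2 ^ n →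
      |(Dcount N h p x : ℝ) - c * a * x| ≤ (c + 4 * K) * (x / q) ^ τ := by
    intro n
    induction n with
    | zero =>
      intro x hx hx1
      rw [pow_zero] at hx1
      rw [hzero x (by linarith)]
      have h1 : x / q < 1 := by rw [div_lt_one hq0]; linarith
      have h2 : x / q ≤ (x / q) ^ τ := by
        calc x / q = (x / q) ^ (1 : ℝ) := by simp
          _ ≤ _ := Real.rpow_le_rpow_of_exponent_ge (by positivity) h1.le hτ1.le
      have h3 : c * a * x ≤ c * (x / q) := by
        rw [mul_assoc]
        gcongr
        calc a * x ≤ 1 / q * x := by gcongr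
          _ = x / q := by ring
      rw [Nat.cast_zero, zero_sub, abs_neg, abs_of_nonneg (by positivity)]
      have h4 : 0 < (x / q) ^ τ := by positivity
      nlinarith
    | succ n ih =>
      intro x hx hx1
      have hxh : x / q ^ h < 2 ^ n := by
        rw [div_lt_iff₀ (by positivity)]
        rw [pow_succ] at hx1
        have h2n : (0 : ℝ) < 2 ^ n := by positivity
        have hq2 : (2 : ℝ) ≤ q ^ h := by nlinarith
        exact hx1.trans_le (mul_le_mul_of_nonneg_left hq2 h2n.le)
      have h1 := ih (x / q ^ h) (by positivity) hxh
      have h2 := hS (x / q) (by positivity)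
      have h3 := hS (x / q ^ h) (by positivity)
      have hr : (Dcount N h p x : ℝ) + Scount N h (x / q ^ h)
          = Scount N h (x / q) + Dcount N h p (x / q ^ h) := by exact_mod_cast hrec x
      have e : (Dcount N h p x : ℝ) - c * a * x
          = ((Scount N h (x / q) : ℝ) - c * (x / q)) - ((Scount N h (x / q ^ h) : ℝ) - c * (x / q ^ h))
            + ((Dcount N h p (x / q ^ h) : ℝ) - c * a * (x / q ^ h)) := by
        linear_combination hr - c * x * harec
      have p1 : (x / q ^ h) ^ τ ≤ (x / q) ^ τ := by
        apply Real.rpow_le_rpow (by positivity) _ (by linarith)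
        apply div_le_div_of_nonneg_left hx.le hq0
        nlinarith
      have p2 : (x / q ^ h / q) ^ τ ≤ 1 / 2 * (x / q) ^ τ := by
        have : x / q ^ h / q ≤ 1 / 4 * (x / q) := by
          rw [div_right_comm, div_eq_mul_inv, mul_comm]
          gcongr
          rw [one_div]
          apply inv_anti₀ (by norm_num); nlinarith
        calc (x / q ^ h / q) ^ τ ≤ (1 / 4 * (x / q)) ^ τ :=
              Real.rpow_le_rpow (by positivity) this (by linarith)
          _ = (1 / 4) ^ τ * (x / q) ^ τ := Real.mul_rpow (by norm_num) (by positivity)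
          _ ≤ 1 / 2 * (x / q) ^ τ := by
              gcongr
              calc (1 / 4 : ℝ) ^ τ ≤ (1 / 4) ^ (1 / 2 : ℝ) :=
                    Real.rpow_le_rpow_of_exponent_ge (by norm_num) (by norm_num) (by linarith)
                _ = 1 / 2 := by
                  rw [← Real.sqrt_eq_rpow, show (1 / 4 : ℝ) = (1 / 2) ^ 2 by norm_num]
                  exact Real.sqrt_sq (by norm_num)
      rw [e]
      refine (abs_add_le _ _).trans ?_
      have a3 := abs_sub ((Scount N h (x / q) : ℝ) - c * (x / q))
        ((Scount N h (x / q ^ h) : ℝ) - c * (x / q ^ h))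
      have h4 : 0 < (x / q) ^ τ := by positivity
      have h5 := mul_le_mul_of_nonneg_left p1 hK
      have h6 := mul_le_mul_of_nonneg_left p2 (show 0 ≤ c + 4 * K by positivity)
      nlinarith [mul_nonneg hc h4.le, mul_nonneg hK h4.le]
  obtain ⟨n, hn⟩ := pow_unbounded_of_one_lt x (show (1 : ℝ) < 2 by norm_num)
  exact key n x hx hn

include hN hM in
lemma omega_sum (h : ℕ) (x : ℝ) :
    ∑ᶠ m ∈ {m : P →₀ ℕ | HFree h m ∧ (Nm N m : ℝ) ≤ x}, (omegaM m : ℝ)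
      = ∑ p ∈ FF N x, (Dcount N h p x : ℝ) := by
  have hP := LFin_P hM
  have : {m : P →₀ ℕ | HFree h m ∧ (Nm N m : ℝ) ≤ x} = ↑((FF (Nm N) x).filter (HFree h)) := by
    ext m
    simp [hM x m, and_comm]
  rw [this, finsum_mem_coe_finset]
  have e : ∀ m ∈ (FF (Nm N) x).filter (HFree h), (omegaM m : ℝ)
      = ∑ p ∈ FF N x, if 1 ≤ m p then (1 : ℝ) else 0 := by
    intro m hm
    rw [Finset.mem_filter, hM] at hm
    rw [← Finset.sum_filter, Finset.sum_const, nsmul_eq_mul, mul_one, omegaM]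
    congr 2
    ext p
    rw [Finset.mem_filter, hP, Finsupp.mem_support_iff]
    constructor
    · intro hmp
      refine ⟨?_, by omega⟩
      have hle : Finsupp.single p 1 ≤ m := by
        rw [Finsupp.single_le_iff]; omega
      have h1 := hm.1
      rw [← tsub_add_cancel_of_le hle, Nm_add, Nm_single] at h1
      have h2 : (1 : ℝ) ≤ Nm N (m - Finsupp.single p 1) := by exact_mod_cast Nm_pos N hN _
      push_cast at h1
      have : (0 : ℝ) ≤ N p := by positivity
      nlinarith
    · intro h; omega
  rw [Finset.sum_congr rfl e, Finset.sum_comm]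
  apply Finset.sum_congr rfl
  intro p _
  rw [← Finset.sum_filter, Finset.sum_const, nsmul_eq_mul, mul_one, Finset.filter_filter, Dcount]

include hN hM hκ hτ1 hC hI in
lemma b_tail (h : ℕ) (hh : 2 ≤ h) : ∃ K : ℝ, 0 ≤ K ∧ ∀ x : ℝ, 2 ≤ x →
    |∑' p : P, bcoef N h p - ∑ p ∈ FF N x, bcoef N h p| ≤ K / Real.log x := by
  have hP := LFin_P hM
  have hsP := summ_inj hN hM hκ hτ1 hC hI _ single_inj1 (ν := N) (by simp [Nm_single]) (3 / 2)
    (by norm_num)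
  set T := ∑' p : P, (N p : ℝ) ^ (-(3 / 2) : ℝ) with hT
  have hT0 : 0 ≤ T := tsum_nonneg fun _ => by positivity
  have hbT : ∀ p, bcoef N h p ≤ (N p : ℝ) ^ (-(1 / 2) : ℝ) * (N p : ℝ) ^ (-(3 / 2) : ℝ) := by
    intro p
    have hp2 : (2 : ℝ) ≤ N p := by exact_mod_cast hN p
    have hp0 : (0 : ℝ) < N p := by linarith
    refine (bcoef_bounds hN h hh p).2.trans (le_of_eq ?_)
    rw [← Real.rpow_add hp0, show (-(1 / 2) + -(3 / 2) : ℝ) = -2 by norm_num, Real.rpow_neg hp0.le,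
      Real.rpow_two, one_div]
  have hbS : Summable (bcoef N h) := by
    apply Summable.of_nonneg_of_le (fun p => (bcoef_bounds hN h hh p).1) _ hsP
    intro p
    refine (hbT p).trans ?_
    have hp2 : (2 : ℝ) ≤ N p := by exact_mod_cast hN p
    apply mul_le_of_le_one_left (by positivity)
    exact Real.rpow_le_one_of_one_le_of_nonpos (by linarith) (by norm_num)
  refine ⟨2 * T, by positivity, ?_⟩
  intro x hx
  have hx0 : 0 < x := by linarith
  have hlx : 0 < Real.log x := Real.log_pos (by linarith)
  have hs1 : HasSum (fun p => if p ∈ FF N x then bcoef N h p else 0) (∑ p ∈ FF N x, bcoef N h p) := by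
    have := hasSum_sum_of_ne_finset_zero (L := SummationFilter.unconditional P) (f := fun p => if p ∈ FF N x then bcoef N h p else 0)
      (s := FF N x) (fun p hp => by simp [hp])
    convert this using 1
    apply Finset.sum_congr rfl
    intro p hp
    simp [hp]
  have hs2 := hbS.hasSum.sub hs1
  rw [← hs2.tsum_eq, ← Real.norm_eq_abs]
  have hb := hsP.hasSum.mul_left (x ^ (-(1 / 2) : ℝ))
  refine (tsum_of_norm_bounded hb ?_).trans ?_
  · intro p
    by_cases hp : p ∈ FF N x
    · simp only [hp, if_true, sub_self, norm_zero]
      positivity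
    · simp only [hp, if_false, sub_zero]
      rw [Real.norm_eq_abs, abs_of_nonneg (bcoef_bounds hN h hh p).1]
      refine (hbT p).trans ?_
      rw [hP, not_le] at hp
      apply mul_le_mul_of_nonneg_right _ (by positivity)
      exact Real.rpow_le_rpow_of_nonpos hx0 hp.le (by norm_num)
  · rw [← hT, mul_div_right_comm]
    gcongr
    have hlog : Real.log x ≤ x ^ (1 / 2 : ℝ) / (1 / 2) := Real.log_le_rpow_div hx0.le (by norm_num)
    rw [Real.rpow_neg hx0.le, le_div_iff₀ hlx, inv_mul_le_iff₀ (by positivity)]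
    linarith

end mertens

/-- First moment of `ω` over `h`-free elements. -/
theorem first_moment_omega_hfree {P : Type*} [Countable P] (N : P → ℕ)
    (hN : ∀ p, 2 ≤ N p) (κ θ : ℝ) (hstar : StarCond N κ θ)
    (A : ℝ) (hA : IsMertens N A) (h : ℕ) (hh : 2 ≤ h) :
    (fun x : ℝ =>
        (∑ᶠ m ∈ {m : P →₀ ℕ | HFree h m ∧ (Nm N m : ℝ) ≤ x}, (omegaM m : ℝ))
          - κ / zetaM N h * (x * Real.log (Real.log x))
          - κ * C1const N h A / zetaM N h * x)
      =O[atTop] fun x : ℝ => x / Real.log x := by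
  obtain ⟨hκ, hθ0, hθ1, hO⟩ := id hstar
  have hM := star_fin hstar
  have hP := LFin_P hM
  set τ : ℝ := max θ (3 / 4) with hτd
  have hτ34 : 3 / 4 ≤ τ := le_max_right _ _
  have hτ1 : τ < 1 := max_lt hθ1 (by norm_num)
  have hτ0 : 0 < τ := by linarith
  obtain ⟨C, hC, hI⟩ := star_bound hN hstar τ (le_max_left _ _) hτ1.le
  obtain ⟨K1, hK10, hK1⟩ := mertens_A hN hM hκ hτ0 hτ1 hC hI A hA
  obtain ⟨K2, hK20, hK2⟩ := S_asymp hN hM hκ hτ1 hC hI h hh hτ34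
  obtain ⟨K3, hK30, hK3⟩ := b_tail hN hM hκ hτ1 hC hI h hh
  obtain ⟨K4, hK40, hK4⟩ := prime_pow_sum hN hM hκ hτ0 hτ1 hC hI τ hτ0 hτ1
  have hh' : (2 : ℝ) ≤ h := by exact_mod_cast hh
  have hz := zeta_pos hN hM hκ hτ1 hC hI (h : ℝ) (by linarith)
  set c := κ / zetaM N h with hc
  have hc0 : 0 ≤ c := by positivity
  have hD := D_asymp hN hM hτ1 h hh hτ34 c K2 hc0 hK20 hK2
  apply IsBigO.of_bound (c * K1 + c * K3 + (c + 4 * K2) * K4)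
  refine (eventually_ge_atTop (2 : ℝ)).mono fun x hx => ?_
  have hx0 : 0 < x := by linarith
  have hlx : 0 < Real.log x := Real.log_pos (by linarith)
  rw [omega_sum hN hM, Real.norm_eq_abs, Real.norm_eq_abs, abs_of_pos (div_pos hx0 hlx)]
  have h1 := hK1 x hx
  have h3 := hK3 x hx
  have h4 : |∑ p ∈ FF N x, ((Dcount N h p x : ℝ) - c * (1 / (N p : ℝ) - bcoef N h p) * x)|
      ≤ (c + 4 * K2) * (K4 * (x / Real.log x)) := by
    refine (Finset.abs_sum_le_sum_abs _ _).trans ?_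
    refine (Finset.sum_le_sum fun p _ => hD p x hx0).trans ?_
    rw [← Finset.mul_sum]
    exact mul_le_mul_of_nonneg_left (hK4 x hx) (by positivity)
  have hC1 : κ * C1const N h A / zetaM N h = c * (A - ∑' p : P, bcoef N h p) := by
    simp only [hc, C1const, bcoef]
    ring
  rw [hC1]
  set Mx := ∑ p ∈ FF N x, 1 / (N p : ℝ)
  set bx := ∑ p ∈ FF N x, bcoef N h p
  set b := ∑' p : P, bcoef N h p
  have e : ∑ p ∈ FF N x, ((Dcount N h p x : ℝ) - c * (1 / (N p : ℝ) - bcoef N h p) * x)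
      = ∑ p ∈ FF N x, (Dcount N h p x : ℝ) - c * (Mx - bx) * x := by
    rw [Finset.sum_sub_distrib, ← Finset.sum_mul, ← Finset.mul_sum, Finset.sum_sub_distrib]
  rw [e] at h4
  set Dx := ∑ p ∈ FF N x, (Dcount N h p x : ℝ)
  have e2 : Dx - c * (x * Real.log (Real.log x)) - c * (A - b) * x
      = (Dx - c * (Mx - bx) * x) + c * x * (Mx - Real.log (Real.log x) - A) + c * x * (b - bx) := by
    ring
  rw [e2]
  have h5 : |c * x * (Mx - Real.log (Real.log x) - A)| ≤ c * K1 * (x / Real.log x) := by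
    rw [abs_mul, abs_of_nonneg (by positivity)]
    calc _ ≤ c * x * (K1 / Real.log x) := by gcongr
      _ = _ := by ring
  have h6 : |c * x * (b - bx)| ≤ c * K3 * (x / Real.log x) := by
    rw [abs_mul, abs_of_nonneg (by positivity)]
    calc _ ≤ c * x * (K3 / Real.log x) := by gcongr
      _ = _ := by ring
  refine (abs_add_three _ _ _).trans ?_
  linarith
end
end
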